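/- arXiv:2206.05050 — 9 statements merged into one kernel-verified Lean document; each statement's English description precedes it below -/
import Mathlib

section
/- Let V be a finite vertex set with a complete signed graph, color classes V_1,…,V_ℓ ⊆ V with fairness parameters α_1,…,α_ℓ ∈ (0,1], and let ε > 0. For every fractional assignment x on V satisfying the LP fairness constraints, there exists a partition 𝒞 of V such that: (i) every cluster C ∈ 𝒞 with |C| ≥ 2 satisfies |V_i ∩ C| ≤ (1+ε)·α_i·|C| for every i ∈ [ℓ]; and (ii) corr(𝒞) ≤ β · LP(E), where E is the set of all unordered pairs of distinct vertices and β := max{ (1/ε)·max_{i∈[ℓ]} (1−α_i)/α_i , 4 + 1/ε }. -/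
open Finset
open scoped Classical

/-- A fractional assignment (pseudometric valued in `[0,1]`) on the vertex set `V`. -/
structure FracAssign (V : Type*) where
  x : V → V → ℝ
  symm : ∀ u v, x u v = x v u
  diag : ∀ u, x u u = 0
  nonneg : ∀ u v, 0 ≤ x u v
  le_one : ∀ u v, x u v ≤ 1
  triangle : ∀ u v w, x u w ≤ x u v + x v w

variable {V : Type*}

/-- Value of a fractional assignment on an unordered pair. -/
noncomputable def FracAssign.val (f : FracAssign V) : Sym2 V → ℝ :=
  Sym2.lift ⟨f.x, f.symm⟩

/-- LP cost-share of a set `F` of unordered pairs: `x`-value on positive pairs,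
`1 - x` on negative pairs.  `sign e = true` means the pair `e` is positive. -/
noncomputable def LPcost (f : FracAssign V) (sign : Sym2 V → Bool)
    (F : Finset (Sym2 V)) : ℝ :=
  ∑ e ∈ F, if sign e then f.val e else 1 - f.val e

/-- The set of all unordered pairs of distinct vertices. -/
noncomputable def allPairs (V : Type*) [Fintype V] [DecidableEq V] : Finset (Sym2 V) :=
  Finset.univ.filter (fun e : Sym2 V => ¬ e.IsDiag)

/-- `E(S,T)`: unordered pairs of distinct vertices with one endpoint in `S`
and the other in `T`. -/
noncomputable def pairsBetween [Fintype V] [DecidableEq V] (S T : Finset V) :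
    Finset (Sym2 V) :=
  Finset.univ.filter (fun e : Sym2 V =>
    ¬ e.IsDiag ∧ ∃ a b, e = s(a, b) ∧ a ∈ S ∧ b ∈ T)

/-- `E⁺(S,T)`: the positive pairs among `E(S,T)`. -/
noncomputable def Epos [Fintype V] [DecidableEq V] (sign : Sym2 V → Bool)
    (S T : Finset V) : Finset (Sym2 V) :=
  (pairsBetween S T).filter (fun e => sign e)

/-- `E⁻(S,T)`: the negative pairs among `E(S,T)`. -/
noncomputable def Eneg [Fintype V] [DecidableEq V] (sign : Sym2 V → Bool)
    (S T : Finset V) : Finset (Sym2 V) :=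
  (pairsBetween S T).filter (fun e => ¬ sign e)

/-- Both endpoints of the pair `e` lie in a common cluster of `𝒞`. -/
def sameCluster (𝒞 : Finset (Finset V)) (e : Sym2 V) : Prop :=
  ∃ C ∈ 𝒞, ∀ a ∈ e, a ∈ C

/-- Correlation (disagreement) cost of the pairs in `F` w.r.t. the clustering `𝒞`:
negative pairs inside a cluster plus positive pairs across clusters. -/
noncomputable def corrCost (sign : Sym2 V → Bool) (𝒞 : Finset (Finset V))
    (F : Finset (Sym2 V)) : ℕ :=
  (F.filter (fun e => if sign e then ¬ sameCluster 𝒞 e else sameCluster 𝒞 e)).card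

/-- `𝒞` is a partition of `V` into nonempty clusters. -/
def IsPartition [Fintype V] (𝒞 : Finset (Finset V)) : Prop :=
  (∀ C ∈ 𝒞, C.Nonempty) ∧
  (∀ C ∈ 𝒞, ∀ C' ∈ 𝒞, C ≠ C' → Disjoint C C') ∧
  ∀ v : V, ∃ C ∈ 𝒞, v ∈ C

/-- The LP fairness constraints for color classes `Vc` with parameters `α`. -/
def FairLP [Fintype V] (f : FracAssign V) {ℓ : ℕ} (Vc : Fin ℓ → Finset V)
    (α : Fin ℓ → ℝ) : Prop :=
  ∀ u : V, ∀ i : Fin ℓ,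
    ∑ v ∈ Vc i, (1 - f.x u v) ≤ α i * ∑ v : V, (1 - f.x u v)

/-- A `(ρ,σ)`-cluster sequence: each `C j` is the `ρ`-ball (inside the still
uncovered vertices) around its center `u j`, and is `σ`-dense. -/
def ClusterSeq [Fintype V] [DecidableEq V] (f : FracAssign V) (ρ σ : ℝ) {k : ℕ}
    (C : Fin k → Finset V) (u : Fin k → V) : Prop :=
  ∀ j : Fin k,
    (C j).Nonempty ∧
    u j ∈ Finset.univ \ ((Finset.univ.filter (fun i => i < j)).biUnion C) ∧
    C j = (Finset.univ \ ((Finset.univ.filter (fun i => i < j)).biUnion C)).filter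
            (fun v => f.x (u j) v ≤ ρ) ∧
    ∑ v ∈ C j, f.x (u j) v ≤ σ * (C j).card



/-- LP share of an ordered pair; the diagonal is regarded as positive. -/
noncomputable def fccL (f : FracAssign V) (P : V → V → Prop) (v w : V) : ℝ :=
  if P v w then f.x v w else 1 - f.x v w

/-- cost of an ordered pair for the relation `S` (being in the same cluster). -/
noncomputable def fccK (P S : V → V → Prop) (v w : V) : ℝ :=
  if P v w then (if S v w then 0 else 1) else (if S v w then 1 else 0)

lemma fcc_sigma {t σ b : ℝ} (ht : 0 < t) (hb : b = 4 + t) (hσ : σ = 1 / b) :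
    0 < σ ∧ σ < 1 / 4 ∧ b * σ = 1 ∧ (4 + 3 / 2 * t) * (1 / 2 - σ) ≥ 1 + t / 2 := by
  have hb0 : 0 < b := by linarith
  have h1 : b * σ = 1 := by rw [hσ]; field_simp
  have h0 : 0 < σ := by rw [hσ]; positivity
  refine ⟨h0, ?_, h1, ?_⟩
  · by_contra h
    push Not at h
    nlinarith
  · have h2 : t * σ = 1 - 4 * σ := by rw [hb] at h1; linarith
    have h3 : t * σ ≥ 0 := by positivity
    nlinarith

/-- Pairs between a cluster and an outside vertex. -/
lemma fcc_cross (f : FracAssign V) (P : V → V → Prop) {t σ b : ℝ} (ht : 0 < t)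
    (hb : b = 4 + t) (hσ : σ = 1 / b) (C : Finset V) (u v : V)
    (hC : ∀ w ∈ C, f.x u w ≤ 1 / 2) (hd : ∑ w ∈ C, f.x u w ≤ σ * C.card)
    (hv : 1 / 2 < f.x u v) :
    0 ≤ ∑ w ∈ C, (b * fccL f P v w - (if P v w then 1 else 0) - t / 2 * (1 - f.x v w)) := by
  obtain ⟨h0, h4, h1, hk⟩ := fcc_sigma ht hb hσ
  set D := f.x u v with hD
  have hD1 : D ≤ 1 := f.le_one u v
  have key : ∃ lam : ℝ, 0 ≤ lam ∧ ∀ w ∈ C, lam * (σ - f.x u w) ≤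
      b * fccL f P v w - (if P v w then 1 else 0) - t / 2 * (1 - f.x v w) := by
    by_cases hDs : 1 - σ ≤ D
    · refine ⟨0, le_rfl, fun w hw => ?_⟩
      have t1 := f.triangle u w v
      have t2 := f.symm w v
      have y1 := hC w hw
      have x1 := f.le_one v w
      unfold fccL
      rw [hb]
      split_ifs
      · have : 1 / 2 - σ ≤ f.x v w := by linarith
        nlinarith
      · nlinarith
    · push Not at hDs
      have hg : 0 < 1 / 2 - σ := by linarith
      refine ⟨(4 + 3 / 2 * t) * (1 - σ - D) / (1 / 2 - σ), ?_, fun w hw => ?_⟩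
      · apply div_nonneg _ hg.le
        apply mul_nonneg <;> linarith
      have t1 := f.triangle u w v
      have t3 := f.triangle u v w
      have t4 := f.triangle v u w
      have t5 := f.symm v u
      have t2 := f.symm w v
      have y1 := hC w hw
      have y0 := f.nonneg u w
      have x1 := f.le_one v w
      rw [div_mul_eq_mul_div, div_le_iff₀ hg]
      set y := f.x u w
      set z := f.x v w
      set K := 4 + 3 / 2 * t with hK
      have hK0 : 0 < K := by linarith
      unfold fccL
      rw [hb]
      split_ifs
      · -- positive
        have e : (4 + t) * z - 1 - t / 2 * (1 - z) = K * z - (1 + t / 2) := by rw [hK]; ring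
        have e2 : K * (D - y) - K * (1 / 2 - σ) ≤ (4 + t) * z - 1 - t / 2 * (1 - z) := by
          rw [e]
          have : K * (D - y) ≤ K * z := by apply mul_le_mul_of_nonneg_left _ hK0.le; linarith
          linarith
        have e3 : K * (1 - σ - D) * (σ - y) ≤ (K * (D - y) - K * (1 / 2 - σ)) * (1 / 2 - σ) := by
          have : (1 - σ - D) * (σ - y) ≤ ((D - y) - (1 / 2 - σ)) * (1 / 2 - σ) := by
            nlinarith [mul_nonneg (sub_nonneg.2 hv.le) (sub_nonneg.2 y1)]
          nlinarith
        exact e3.trans (mul_le_mul_of_nonneg_right e2 hg.le)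
      · -- negative
        by_cases hy : σ ≤ y
        · have a1 : K * (1 - σ - D) * (σ - y) ≤ 0 := by
            apply mul_nonpos_of_nonneg_of_nonpos
            · apply mul_nonneg <;> linarith
            · linarith
          have a2 : 0 ≤ ((4 + t) * (1 - z) - 0 - t / 2 * (1 - z)) * (1 / 2 - σ) := by
            apply mul_nonneg _ hg.le
            nlinarith
          exact a1.trans a2
        · push Not at hy
          have z1 : 1 - D - y ≤ 1 - z := by linarith
          have a1 : (4 + t / 2) * (1 - D - y) ≤ (4 + t) * (1 - z) - 0 - t / 2 * (1 - z) := by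
            nlinarith
          refine le_trans ?_ (mul_le_mul_of_nonneg_right a1 hg.le)
          have a2 : (1 - σ - D) * (σ - y) ≤ σ * (1 / 2 - σ) * ((1 - D - y) / (1 / 2)) := by
            have i1 : 0 ≤ (1 - σ - D) * (2 * (1 / 2 - σ) * y) := by
              apply mul_nonneg; linarith
              apply mul_nonneg; linarith
              exact y0
            have i2 : 0 ≤ (D - 1 / 2) * (2 * σ * (σ - y)) := by
              apply mul_nonneg; linarith
              apply mul_nonneg; linarith
              linarith
            linarith
          have a3 : K * σ ≤ 1 + t / 4 := by rw [hK] at hk ⊢; linarith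
          have a4 : 0 ≤ (1 / 2 - σ) * ((1 - D - y) / (1 / 2)) := by
            apply mul_nonneg hg.le; apply div_nonneg <;> linarith
          nlinarith
  obtain ⟨lam, hl, hw⟩ := key
  have := Finset.sum_le_sum hw
  refine le_trans ?_ this
  rw [← Finset.mul_sum, Finset.sum_sub_distrib, Finset.sum_const, nsmul_eq_mul]
  apply mul_nonneg hl
  linarith

/-- Pairs inside a cluster. -/
lemma fcc_inner (f : FracAssign V) (P : V → V → Prop) (hP : ∀ v w, P v w ↔ P w v)
    {t σ b : ℝ} (ht : 0 < t)
    (hb : b = 4 + t) (hσ : σ = 1 / b) (C : Finset V) (u : V)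
    (hC : ∀ w ∈ C, f.x u w ≤ 1 / 2) (hd : ∑ w ∈ C, f.x u w ≤ σ * C.card) :
    0 ≤ ∑ v ∈ C, ∑ w ∈ C, (b * fccL f P v w - (if P v w then 0 else 1)) := by
  obtain ⟨h0, h4, h1, hk⟩ := fcc_sigma ht hb hσ
  have hb0 : 0 < b := by linarith
  set g : V → V → ℝ := fun v w => b * fccL f P v w - (if P v w then 0 else 1) with hg
  have gsymm : ∀ v w, g v w = g w v := by
    intro v w
    simp only [hg, fccL, hP v w, f.symm v w]
  have main : ∀ v ∈ C, ∀ S ⊆ C, (∀ w ∈ S, f.x u w ≤ f.x u v) →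
      (∀ w ∈ C, w ∉ S → f.x u v ≤ f.x u w) → 0 ≤ ∑ w ∈ S, g v w := by
    intro v hv S hS hS1 hS2
    have d1 := hC v hv
    have tri : ∀ w, f.x u v - f.x u w ≤ f.x v w ∧ f.x v w ≤ f.x u v + f.x u w := by
      intro w
      have t1 := f.triangle u w v
      have t4 := f.triangle v u w
      have t5 := f.symm v u
      have t2 := f.symm w v
      constructor <;> linarith
    by_cases hdσ : f.x u v < σ
    · apply Finset.sum_nonneg
      intro w hw
      have := hS1 w hw
      have := tri w
      have := f.nonneg v w
      simp only [hg, fccL]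
      split_ifs
      · nlinarith
      · nlinarith
    · push Not at hdσ
      have hsum : ∑ w ∈ S, f.x u w ≤ σ * S.card := by
        have e1 := Finset.sum_sdiff hS (f := fun w => σ - f.x u w)
        have e2 : ∑ w ∈ C \ S, (σ - f.x u w) ≤ 0 := by
          apply Finset.sum_nonpos
          intro w hw
          rw [Finset.mem_sdiff] at hw
          linarith [hS2 w hw.1 hw.2]
        simp only [Finset.sum_sub_distrib, Finset.sum_const, nsmul_eq_mul] at e1 e2
        linarith
      have hw : ∀ w ∈ S, b * (σ - f.x u w) ≤ g v w := by
        intro w hw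
        have := tri w
        simp only [hg, fccL]
        split_ifs
        · nlinarith
        · nlinarith
      refine le_trans ?_ (Finset.sum_le_sum hw)
      rw [← Finset.mul_sum, Finset.sum_sub_distrib, Finset.sum_const, nsmul_eq_mul]
      apply mul_nonneg hb0.le
      linarith
  have A : ∀ v ∈ C, 0 ≤ ∑ w ∈ C.filter (fun w => f.x u w < f.x u v), g v w := by
    intro v hv
    apply main v hv _ (Finset.filter_subset _ _)
    · intro w hw; exact (Finset.mem_filter.1 hw).2.le
    · intro w hw h; by_contra h'; exact h (Finset.mem_filter.2 ⟨hw, by linarith⟩)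
  have B : ∀ v ∈ C, 0 ≤ ∑ w ∈ C.filter (fun w => f.x u w ≤ f.x u v), g v w := by
    intro v hv
    apply main v hv _ (Finset.filter_subset _ _)
    · intro w hw; exact (Finset.mem_filter.1 hw).2
    · intro w hw h; by_contra h'; exact h (Finset.mem_filter.2 ⟨hw, by linarith⟩)
  have A' := Finset.sum_nonneg A
  have B' := Finset.sum_nonneg B
  have E : ∑ v ∈ C, ∑ w ∈ C, g v w =
      ∑ v ∈ C, ∑ w ∈ C.filter (fun w => f.x u w < f.x u v), g v w +
      ∑ v ∈ C, ∑ w ∈ C.filter (fun w => f.x u w ≤ f.x u v), g v w := by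
    have s1 : ∑ v ∈ C, ∑ w ∈ C.filter (fun w => f.x u w < f.x u v), g v w =
        ∑ v ∈ C, ∑ w ∈ C, if f.x u v < f.x u w then g v w else 0 := by
      rw [Finset.sum_comm' (t' := C) (s' := fun w => C.filter (fun v => f.x u w < f.x u v))]
      · apply Finset.sum_congr rfl
        intro w _
        rw [Finset.sum_filter]
        apply Finset.sum_congr rfl
        intro v _
        rw [gsymm]
      · intro a c; simp only [Finset.mem_filter]; tauto
    rw [s1, ← Finset.sum_add_distrib]
    apply Finset.sum_congr rfl
    intro v _
    rw [Finset.sum_filter, ← Finset.sum_add_distrib]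
    apply Finset.sum_congr rfl
    intro w _
    by_cases h : f.x u v < f.x u w
    · simp [h, not_le.2 h]
    · simp [h, not_lt.1 h]
  rw [E]
  linarith

/-- Pairs of a leftover vertex inside the leftover set. -/
lemma fcc_left [Fintype V] [DecidableEq V] (f : FracAssign V) (P : V → V → Prop)
    {t σ b β ε a : ℝ} (ht : 0 < t) (hε : 0 < ε) (hte : t = 1 / ε)
    (hb : b = 4 + t) (hσ : σ = 1 / b) (hβ : b ≤ β) (A R C : Finset V) (v : V)
    (ha0 : 0 < a) (hβa : 1 / ε * ((1 - a) / a) ≤ β)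
    (hfair : ∑ w ∈ A, (1 - f.x v w) ≤ a * ∑ w : V, (1 - f.x v w))
    (hC : C = R.filter (fun w => f.x v w ≤ 1 / 2))
    (hbad : ¬ (∑ w ∈ C, f.x v w ≤ σ * C.card) ∨ ¬ ((A ∩ C).card : ℝ) ≤ (1 + ε) * a * C.card) :
    ∑ w ∈ R, (if P v w then (if v = w then (0:ℝ) else 1) else 0) ≤
      ∑ w ∈ R, β * fccL f P v w + ∑ w ∈ Rᶜ, t * (1 - f.x v w) := by
  have hb0 : 0 < b := by linarith
  have hβ0 : 0 < β := by linarith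
  have hCR : C ⊆ R := by rw [hC]; exact Finset.filter_subset _ _
  have hC1 : ∀ w ∈ C, f.x v w ≤ 1 / 2 := by
    intro w hw; rw [hC] at hw; exact (Finset.mem_filter.1 hw).2
  have hC2 : ∀ w ∈ R \ C, 1 / 2 < f.x v w := by
    intro w hw
    rw [Finset.mem_sdiff] at hw
    by_contra h
    exact hw.2 (by rw [hC]; exact Finset.mem_filter.2 ⟨hw.1, not_lt.1 h⟩)
  -- bound on the size of the ball
  have hsize : ∃ k s : ℝ, k ≤ β ∧ 0 ≤ s ∧ s ≤ t ∧
      (C.card : ℝ) ≤ ∑ w ∈ C, k * f.x v w + ∑ w ∈ R \ C, s * (1 - f.x v w)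
        + ∑ w ∈ Rᶜ, t * (1 - f.x v w) := by
    rcases hbad with h | h
    · refine ⟨b, 0, hβ, le_rfl, ht.le, ?_⟩
      push Not at h
      have : 0 ≤ ∑ w ∈ Rᶜ, t * (1 - f.x v w) := by
        apply Finset.sum_nonneg
        intro w _
        exact mul_nonneg ht.le (sub_nonneg.2 (f.le_one v w))
      rw [← Finset.mul_sum]
      have h2 : b * (σ * C.card) = C.card := by rw [hσ]; field_simp
      have h3 := mul_le_mul_of_nonneg_left h.le hb0.le
      simp only [zero_mul, Finset.sum_const_zero]
      linarith
    · refine ⟨1 / ε * ((1 - a) / a), t, hβa, ht.le, le_rfl, ?_⟩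
      push Not at h
      simp only [← Finset.mul_sum]
      have e1 : ∑ w : V, (1 - f.x v w) = ∑ w ∈ Rᶜ, (1 - f.x v w)
          + (∑ w ∈ R \ C, (1 - f.x v w) + (C.card - ∑ w ∈ C, f.x v w)) := by
        rw [← Finset.sum_compl_add_sum R, ← Finset.sum_sdiff hCR]
        simp [Finset.sum_sub_distrib]
      have e2 : ∑ w ∈ A ∩ C, (1 - f.x v w) ≤ ∑ w ∈ A, (1 - f.x v w) := by
        apply Finset.sum_le_sum_of_subset_of_nonneg Finset.inter_subset_left
        intro w _ _
        exact sub_nonneg.2 (f.le_one v w)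
      have e3 : ∑ w ∈ A ∩ C, f.x v w ≤ ∑ w ∈ C, f.x v w := by
        apply Finset.sum_le_sum_of_subset_of_nonneg Finset.inter_subset_right
        intro w _ _
        exact f.nonneg v w
      rw [Finset.sum_sub_distrib, Finset.sum_const, nsmul_eq_mul, mul_one] at e2
      rw [e1] at hfair
      set X := ∑ w ∈ C, f.x v w
      set Y := ∑ w ∈ R \ C, (1 - f.x v w)
      set Z := ∑ w ∈ Rᶜ, (1 - f.x v w)
      have e4 : ε * a * C.card ≤ (1 - a) * X + a * Y + a * Z := by nlinarith
      have e5 : 1 / ε * ((1 - a) / a) * X + t * Y + t * Z =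
          ((1 - a) * X + a * Y + a * Z) / (ε * a) := by
        rw [hte]; field_simp
      rw [e5, le_div_iff₀ (by positivity)]
      linarith
  obtain ⟨k, s, hk, hs0, hst, hsz⟩ := hsize
  rw [← Finset.sum_sdiff hCR, ← Finset.sum_sdiff hCR (f := fun w => β * fccL f P v w)]
  have c1 : ∑ w ∈ C, (if P v w then (if v = w then (0:ℝ) else 1) else 0) +
      ∑ w ∈ C, k * f.x v w ≤ ∑ w ∈ C, β * fccL f P v w + C.card := by
    rw [← nsmul_one C.card, ← Finset.sum_const, ← Finset.sum_add_distrib,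
      ← Finset.sum_add_distrib]
    apply Finset.sum_le_sum
    intro w hw
    have := hC1 w hw
    have x0 := f.nonneg v w
    have := mul_le_mul_of_nonneg_right hk x0
    unfold fccL
    split_ifs
    · linarith
    · linarith
    · nlinarith
  have c2 : ∑ w ∈ R \ C, (if P v w then (if v = w then (0:ℝ) else 1) else 0) +
      ∑ w ∈ R \ C, s * (1 - f.x v w) ≤ ∑ w ∈ R \ C, β * fccL f P v w := by
    rw [← Finset.sum_add_distrib]
    apply Finset.sum_le_sum
    intro w hw
    have := hC2 w hw
    have x1 := f.le_one v w
    have := mul_le_mul_of_nonneg_right hst (sub_nonneg.2 x1)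
    have := mul_le_mul_of_nonneg_right hβ (sub_nonneg.2 x1)
    have := mul_le_mul_of_nonneg_right hβ (f.nonneg v w)
    unfold fccL
    split_ifs
    · nlinarith
    · nlinarith
    · nlinarith
  linarith

/-- A ball that is dense and, unless it is a singleton, fair. -/
def fccGood [DecidableEq V] (f : FracAssign V) {ℓ : ℕ} (Vc : Fin ℓ → Finset V) (α : Fin ℓ → ℝ)
    (ε σ : ℝ) (u : V) (C : Finset V) : Prop :=
  ∑ w ∈ C, f.x u w ≤ σ * C.card ∧
    (2 ≤ C.card → ∀ i : Fin ℓ, ((Vc i ∩ C).card : ℝ) ≤ (1 + ε) * α i * C.card)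

/-- Belonging to a common cluster. -/
def fccS (𝒞 : Finset (Finset V)) (v w : V) : Prop := ∃ C ∈ 𝒞, v ∈ C ∧ w ∈ C

/-- Slack function of an ordered pair. -/
noncomputable def fccG (f : FracAssign V) (P : V → V → Prop) (t b : ℝ) (𝒞 : Finset (Finset V))
    (R : Finset V) (v w : V) : ℝ :=
  if v ∈ R ∧ w ∈ R then 0 else
    b * fccL f P v w - fccK P (fccS 𝒞) v w -
      (if v ∈ R ∨ w ∈ R then t / 2 * (1 - f.x v w) else 0)

lemma fcc_ind [DecidableEq V] (f : FracAssign V) (P : V → V → Prop)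
    (hP : ∀ v w, P v w ↔ P w v) {ℓ : ℕ} (Vc : Fin ℓ → Finset V) (α : Fin ℓ → ℝ)
    {t σ b ε : ℝ} (ht : 0 < t) (hb : b = 4 + t) (hσ : σ = 1 / b) (n : ℕ) :
    ∀ U : Finset V, U.card ≤ n → ∃ (R : Finset V) (𝒞 : Finset (Finset V)), R ⊆ U ∧
      (∀ C ∈ 𝒞, C.Nonempty) ∧ (∀ C ∈ 𝒞, C ⊆ U) ∧
      (∀ C ∈ 𝒞, ∀ C' ∈ 𝒞, C ≠ C' → Disjoint C C') ∧
      (∀ v ∈ U, ∃ C ∈ 𝒞, v ∈ C) ∧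
      (∀ C ∈ 𝒞, 2 ≤ C.card → ∀ i : Fin ℓ,
        ((Vc i ∩ C).card : ℝ) ≤ (1 + ε) * α i * C.card) ∧
      (∀ v ∈ R, ¬ fccGood f Vc α ε σ v (R.filter (fun w => f.x v w ≤ 1 / 2))) ∧
      (∀ v ∈ R, ∀ w ∈ R, fccS 𝒞 v w → v = w) ∧
      0 ≤ ∑ v ∈ U, ∑ w ∈ U, fccG f P t b 𝒞 R v w := by
  induction n with
  | zero =>
    intro U hU
    have : U = ∅ := by simpa using hU
    subst this
    exact ⟨∅, ∅, by simp⟩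
  | succ n ih =>
    intro U hU
    by_cases h : ∃ u ∈ U, fccGood f Vc α ε σ u (U.filter (fun w => f.x u w ≤ 1 / 2))
    · obtain ⟨u, huU, hu⟩ := h
      set C := U.filter (fun w => f.x u w ≤ 1 / 2) with hC
      have hCU : C ⊆ U := Finset.filter_subset _ _
      have huC : u ∈ C := by
        rw [hC]; exact Finset.mem_filter.2 ⟨huU, by rw [f.diag]; norm_num⟩
      have hcard : (U \ C).card ≤ n := by
        have : (U \ C).card < U.card :=
          Finset.card_lt_card (Finset.sdiff_ssubset hCU ⟨u, huC⟩)
        omega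
      obtain ⟨R, 𝒞, hR, h1, h2, h3, h4, h5, h6, h7, h8⟩ := ih (U \ C) hcard
      have hdis : ∀ C' ∈ 𝒞, Disjoint C C' := by
        intro C' hC'
        exact Finset.disjoint_of_subset_right (h2 C' hC') Finset.disjoint_sdiff
      have hRC : ∀ v ∈ C, v ∉ R := fun v hv hvR => (Finset.mem_sdiff.1 (hR hvR)).2 hv
      have hS1 : ∀ v ∈ U \ C, ∀ w, fccS (insert C 𝒞) v w ↔ fccS 𝒞 v w := by
        intro v hv w
        unfold fccS
        constructor
        · rintro ⟨D, hD, hvD, hwD⟩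
          rcases Finset.mem_insert.1 hD with rfl | hD
          · exact absurd hvD (Finset.mem_sdiff.1 hv).2
          · exact ⟨D, hD, hvD, hwD⟩
        · rintro ⟨D, hD, hvD, hwD⟩
          exact ⟨D, Finset.mem_insert_of_mem hD, hvD, hwD⟩
      have hS2 : ∀ v ∈ C, ∀ w ∈ C, fccS (insert C 𝒞) v w :=
        fun v hv w hw => ⟨C, Finset.mem_insert_self _ _, hv, hw⟩
      have hS3 : ∀ v ∈ U \ C, ∀ w ∈ C, ¬ fccS (insert C 𝒞) v w := by
        intro v hv w hw hs
        rw [hS1 v hv] at hs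
        obtain ⟨D, hD, -, hwD⟩ := hs
        exact (Finset.disjoint_left.1 (hdis D hD)) hw hwD
      have hSs : ∀ v w, fccS (insert C 𝒞) v w ↔ fccS (insert C 𝒞) w v := by
        intro v w
        unfold fccS
        constructor <;> rintro ⟨D, hD, a, b⟩ <;> exact ⟨D, hD, b, a⟩
      have hGs : ∀ v w, fccG f P t b (insert C 𝒞) R v w = fccG f P t b (insert C 𝒞) R w v := by
        intro v w
        unfold fccG fccL fccK
        simp only [hP v w, hSs v w, f.symm v w, and_comm (a := v ∈ R), or_comm (a := v ∈ R)]
        congr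
      have hCb : ∀ w ∈ C, f.x u w ≤ 1 / 2 := fun w hw => (Finset.mem_filter.1 hw).2
      have hcr : ∀ v ∈ U \ C, 0 ≤ ∑ w ∈ C, fccG f P t b (insert C 𝒞) R v w := by
        intro v hv
        have hvx : 1 / 2 < f.x u v := by
          by_contra hh
          rw [Finset.mem_sdiff] at hv
          exact hv.2 (Finset.mem_filter.2 ⟨hv.1, not_lt.1 hh⟩)
        refine (fcc_cross f P ht hb hσ C u v hCb hu.1 hvx).trans (Finset.sum_le_sum ?_)
        intro w hw
        have hwR := hRC w hw
        have : 0 ≤ t / 2 * (1 - f.x v w) :=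
          mul_nonneg (by linarith) (sub_nonneg.2 (f.le_one v w))
        have hs := hS3 v hv w hw
        unfold fccG fccK
        simp only [hwR, and_false, or_false, if_false, hs]
        split_ifs <;> linarith
      have hin : 0 ≤ ∑ v ∈ C, ∑ w ∈ C, fccG f P t b (insert C 𝒞) R v w := by
        refine (fcc_inner f P hP ht hb hσ C u hCb hu.1).trans (le_of_eq ?_)
        refine Finset.sum_congr rfl fun v hv => Finset.sum_congr rfl fun w hw => ?_
        unfold fccG fccK
        simp [hRC v hv, hRC w hw, hS2 v hv w hw]
      have hout : ∑ v ∈ U \ C, ∑ w ∈ U \ C, fccG f P t b (insert C 𝒞) R v w =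
          ∑ v ∈ U \ C, ∑ w ∈ U \ C, fccG f P t b 𝒞 R v w := by
        refine Finset.sum_congr rfl fun v hv => Finset.sum_congr rfl fun w hw => ?_
        unfold fccG fccK
        simp only [hS1 v hv]
        congr
      refine ⟨R, insert C 𝒞, hR.trans Finset.sdiff_subset, ?_, ?_, ?_, ?_, ?_, h6, ?_, ?_⟩
      · intro D hD
        rcases Finset.mem_insert.1 hD with rfl | hD
        · exact ⟨u, huC⟩
        · exact h1 D hD
      · intro D hD
        rcases Finset.mem_insert.1 hD with rfl | hD
        · exact hCU
        · exact (h2 D hD).trans Finset.sdiff_subset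
      · intro D hD D' hD' hne
        rcases Finset.mem_insert.1 hD with e | hD <;>
          rcases Finset.mem_insert.1 hD' with e' | hD'
        · exact absurd (e.trans e'.symm) hne
        · rw [e]; exact hdis _ hD'
        · rw [e']; exact (hdis _ hD).symm
        · exact h3 D hD D' hD' hne
      · intro v hv
        by_cases hvC : v ∈ C
        · exact ⟨C, Finset.mem_insert_self _ _, hvC⟩
        · obtain ⟨D, hD, hvD⟩ := h4 v (Finset.mem_sdiff.2 ⟨hv, hvC⟩)
          exact ⟨D, Finset.mem_insert_of_mem hD, hvD⟩
      · intro D hD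
        rcases Finset.mem_insert.1 hD with e | hD
        · rw [e]; exact hu.2
        · exact h5 D hD
      · intro v hv w hw hs
        exact h7 v hv w hw ((hS1 v (hR hv) w).1 hs)
      · rw [← Finset.sum_sdiff hCU]
        simp_rw [← Finset.sum_sdiff hCU (f := fun w => fccG f P t b (insert C 𝒞) R _ w)]
        rw [Finset.sum_add_distrib, Finset.sum_add_distrib, hout]
        have k1 := Finset.sum_nonneg hcr
        have k2 : ∑ v ∈ C, ∑ w ∈ U \ C, fccG f P t b (insert C 𝒞) R v w =
            ∑ v ∈ U \ C, ∑ w ∈ C, fccG f P t b (insert C 𝒞) R v w := by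
          rw [Finset.sum_comm]
          exact Finset.sum_congr rfl fun v _ => Finset.sum_congr rfl fun w _ => hGs _ _
        linarith
    · push Not at h
      refine ⟨U, U.image (fun v => {v}), subset_rfl, ?_, ?_, ?_, ?_, ?_, h, ?_, ?_⟩
      · simp
      · simp
      · simp only [Finset.mem_image]
        rintro _ ⟨a, _, rfl⟩ _ ⟨c, _, rfl⟩ hne
        simp only [Finset.disjoint_singleton]
        rintro rfl; exact hne rfl
      · intro v hv; exact ⟨{v}, Finset.mem_image_of_mem _ hv, by simp⟩
      · simp only [Finset.mem_image]
        rintro _ ⟨a, _, rfl⟩ h2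
        simp at h2
      · rintro v hv w hw ⟨D, hD, a, c⟩
        obtain ⟨z, -, rfl⟩ := Finset.mem_image.1 hD
        rw [Finset.mem_singleton] at a c
        rw [a, c]
      · apply Finset.sum_nonneg
        intro v hv
        apply Finset.sum_nonneg
        intro w hw
        unfold fccG
        simp [hv, hw]

/-- Sums over unordered pairs versus ordered pairs. -/
lemma fcc_sym [Fintype V] [DecidableEq V] (g : Sym2 V → ℝ) (g2 : V → V → ℝ)
    (hg : ∀ v w, v ≠ w → g2 v w = g s(v, w)) (hd : ∀ v, g2 v v = 0) :
    ∑ v : V, ∑ w : V, g2 v w = 2 * ∑ e ∈ allPairs V, g e := by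
  have e1 : ∑ v : V, ∑ w : V, g2 v w =
      ∑ p ∈ (Finset.univ : Finset (V × V)).filter (fun p => p.1 ≠ p.2), g s(p.1, p.2) := by
    rw [← Fintype.sum_prod_type', Finset.sum_filter]
    refine Finset.sum_congr rfl fun p _ => ?_
    by_cases h : p.1 = p.2
    · simp [h, hd]
    · simp [h, hg]
  rw [e1, ← Finset.sum_fiberwise_of_maps_to (t := allPairs V) (g := fun p => s(p.1, p.2)),
    Finset.mul_sum]
  · refine Finset.sum_congr rfl fun e he => ?_
    induction e using Sym2.ind with
    | _ a c =>
      have hac : a ≠ c := by simpa [allPairs] using he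
      have : (((Finset.univ : Finset (V × V)).filter (fun p => p.1 ≠ p.2)).filter
          (fun p => s(p.1, p.2) = s(a, c))) = {(a, c), (c, a)} := by
        ext ⟨p, q⟩
        simp only [Finset.mem_filter, Finset.mem_univ, true_and, Sym2.eq_iff,
          Finset.mem_insert, Finset.mem_singleton, Prod.mk.injEq]
        constructor
        · tauto
        · rintro (⟨rfl, rfl⟩ | ⟨rfl, rfl⟩)
          · exact ⟨hac, Or.inl ⟨rfl, rfl⟩⟩
          · exact ⟨hac.symm, Or.inr ⟨rfl, rfl⟩⟩
      rw [this, Finset.sum_pair (by simp [hac])]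
      simp only [Sym2.eq_swap (a := c) (b := a)]
      ring
  · intro p hp
    simpa [allPairs] using hp

/-- For every fractional assignment satisfying the LP fairness
constraints there is a partition whose non-singleton clusters are `(1+ε)`-fair
and whose correlation cost is at most `β · LP(E)` with
`β = max ((1/ε) · max_i (1-α i)/α i) (4 + 1/ε)`. -/
theorem fair_correlation_clustering_main {V : Type*} [Fintype V] [DecidableEq V]
    (sign : Sym2 V → Bool) {ℓ : ℕ} (hℓ : 0 < ℓ)
    (Vc : Fin ℓ → Finset V) (α : Fin ℓ → ℝ)
    (hα0 : ∀ i, 0 < α i) (hα1 : ∀ i, α i ≤ 1)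
    (ε : ℝ) (hε : 0 < ε)
    (f : FracAssign V) (hfair : FairLP f Vc α) :
    ∃ 𝒞 : Finset (Finset V), IsPartition 𝒞 ∧
      (∀ C ∈ 𝒞, 2 ≤ C.card → ∀ i : Fin ℓ,
        ((Vc i ∩ C).card : ℝ) ≤ (1 + ε) * α i * C.card) ∧
      (corrCost sign 𝒞 (allPairs V) : ℝ) ≤
        max ((1 / ε) *
              Finset.univ.sup' ⟨⟨0, hℓ⟩, Finset.mem_univ _⟩
                (fun i => (1 - α i) / α i))
            (4 + 1 / ε) * LPcost f sign (allPairs V) := by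
  set t := 1 / ε with hte
  have ht : 0 < t := by positivity
  set b := 4 + t with hb
  set β := max (t * Finset.univ.sup' ⟨⟨0, hℓ⟩, Finset.mem_univ _⟩
                (fun i => (1 - α i) / α i)) b with hβ
  have hbβ : b ≤ β := le_max_right _ _
  have hβi : ∀ i, 1 / ε * ((1 - α i) / α i) ≤ β := by
    intro i
    refine le_trans ?_ (le_max_left _ _)
    apply mul_le_mul_of_nonneg_left _ ht.le
    exact Finset.le_sup' (fun i => (1 - α i) / α i) (Finset.mem_univ i)
  set P : V → V → Prop := fun v w => v = w ∨ sign s(v, w) = true with hPdef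
  have hP : ∀ v w, P v w ↔ P w v := by
    intro v w
    simp only [hPdef, eq_comm (a := v), Sym2.eq_swap (a := v)]
  obtain ⟨R, 𝒞, -, h1, -, h3, h4, h5, h6, h7, h8⟩ :=
    fcc_ind f P hP Vc α (ε := ε) ht hb rfl (Finset.univ : Finset V).card Finset.univ le_rfl
  refine ⟨𝒞, ⟨h1, h3, fun v => h4 v (Finset.mem_univ v)⟩, h5, ?_⟩
  have hrefl : ∀ v, fccS 𝒞 v v := by
    intro v
    obtain ⟨C, hC, hv⟩ := h4 v (Finset.mem_univ v)
    exact ⟨C, hC, hv, hv⟩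
  have hcost : ∑ v : V, ∑ w : V, fccK P (fccS 𝒞) v w =
      2 * (corrCost sign 𝒞 (allPairs V) : ℝ) := by
    rw [fcc_sym (fun e => if (if sign e then ¬ sameCluster 𝒞 e else sameCluster 𝒞 e)
      then (1 : ℝ) else 0)]
    · unfold corrCost
      rw [Finset.card_filter]
      push_cast
      rfl
    · intro v w hvw
      have hs : sameCluster 𝒞 s(v, w) ↔ fccS 𝒞 v w := by
        unfold sameCluster fccS
        simp
      unfold fccK
      simp only [hs, hPdef, hvw, false_or]
      by_cases hh : sign s(v, w) = true <;> by_cases h' : fccS 𝒞 v w <;> simp [hh, h']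
    · intro v
      unfold fccK
      simp [hPdef, hrefl]
  have hlp : ∑ v : V, ∑ w : V, fccL f P v w = 2 * LPcost f sign (allPairs V) := by
    unfold LPcost
    apply fcc_sym
    · intro v w hvw
      unfold fccL
      simp [hPdef, hvw, FracAssign.val]
    · intro v
      unfold fccL
      simp [hPdef, f.diag]
  -- leftover vertices
  have hleft : ∀ v ∈ R, ∑ w ∈ R, fccK P (fccS 𝒞) v w ≤
      ∑ w ∈ R, β * fccL f P v w + ∑ w ∈ Rᶜ, t * (1 - f.x v w) := by
    intro v hv
    have hk : ∑ w ∈ R, fccK P (fccS 𝒞) v w =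
        ∑ w ∈ R, (if P v w then (if v = w then (0:ℝ) else 1) else 0) := by
      refine Finset.sum_congr rfl fun w hw => ?_
      unfold fccK
      by_cases hvw : v = w
      · subst hvw; simp [hPdef, hrefl]
      · have : ¬ fccS 𝒞 v w := fun hs => hvw (h7 v hv w hw hs)
        simp [this, hvw]
    rw [hk]
    have hb6 := h6 v hv
    unfold fccGood at hb6
    have : ∃ i, ¬ (∑ w ∈ R.filter (fun w => f.x v w ≤ 1 / 2), f.x v w ≤
        1 / b * (R.filter (fun w => f.x v w ≤ 1 / 2)).card) ∨
        ¬ ((Vc i ∩ R.filter (fun w => f.x v w ≤ 1 / 2)).card : ℝ) ≤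
          (1 + ε) * α i * (R.filter (fun w => f.x v w ≤ 1 / 2)).card := by
      by_contra hcon
      push Not at hcon
      exact hb6 ⟨(hcon ⟨0, hℓ⟩).1, fun _ i => (hcon i).2⟩
    obtain ⟨i, hi⟩ := this
    convert fcc_left f P ht hε hte hb rfl hbβ (Vc i) R _ v (hα0 i) (hβi i) (hfair v i) rfl hi
  have hleft' := Finset.sum_le_sum hleft
  have hLnn : ∀ v w, 0 ≤ fccL f P v w := by
    intro v w
    unfold fccL
    split_ifs
    · exact f.nonneg v w
    · exact sub_nonneg.2 (f.le_one v w)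
  -- upper bound on the slack function
  have hG : ∑ v : V, ∑ w : V, fccG f P t b 𝒞 R v w ≤
      ∑ v : V, ∑ w : V, ((β * fccL f P v w - fccK P (fccS 𝒞) v w)
        - (if v ∈ R ∧ w ∈ R then β * fccL f P v w - fccK P (fccS 𝒞) v w else 0)
        - (if v ∈ R ∧ w ∈ Rᶜ then t / 2 * (1 - f.x v w) else 0)
        - (if w ∈ R ∧ v ∈ Rᶜ then t / 2 * (1 - f.x w v) else 0)) := by
    refine Finset.sum_le_sum fun v _ => Finset.sum_le_sum fun w _ => ?_
    have := mul_le_mul_of_nonneg_right hbβ (hLnn v w)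
    unfold fccG
    by_cases hv : v ∈ R <;> by_cases hw : w ∈ R <;>
      simp [hv, hw, f.symm w v] <;> linarith
  have hind : ∀ (A B : Finset V) (g : V → V → ℝ),
      ∑ v : V, ∑ w : V, (if v ∈ A ∧ w ∈ B then g v w else 0) = ∑ v ∈ A, ∑ w ∈ B, g v w := by
    intro A B g
    simp only [ite_and]
    simp [Finset.sum_ite_irrel]
  have hsw : ∑ v : V, ∑ w : V, (if w ∈ R ∧ v ∈ Rᶜ then t / 2 * (1 - f.x w v) else 0) =
      ∑ v ∈ R, ∑ w ∈ Rᶜ, t / 2 * (1 - f.x v w) := by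
    rw [Finset.sum_comm]
    exact hind R Rᶜ (fun v w => t / 2 * (1 - f.x v w))
  simp only [Finset.sum_sub_distrib, hsw] at hG
  rw [hind R R (fun v w => β * fccL f P v w - fccK P (fccS 𝒞) v w),
    hind R Rᶜ (fun v w => t / 2 * (1 - f.x v w))] at hG
  have hhalf : ∑ v ∈ R, ∑ w ∈ Rᶜ, t * (1 - f.x v w) =
      2 * ∑ v ∈ R, ∑ w ∈ Rᶜ, t / 2 * (1 - f.x v w) := by
    simp only [Finset.mul_sum]
    refine Finset.sum_congr rfl fun v _ => Finset.sum_congr rfl fun w _ => ?_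
    ring
  have hbl : ∑ v : V, ∑ w : V, β * fccL f P v w = β * (2 * LPcost f sign (allPairs V)) := by
    rw [← hlp]; simp only [Finset.mul_sum]
  simp only [Finset.sum_sub_distrib, Finset.sum_add_distrib] at hG hleft'
  rw [hbl, hcost] at hG
  linarith
end

section
/- Let V be a finite vertex set with a complete signed graph, ε > 0, ℓ ≥ 2, and let p_1,…,p_ℓ be reals with p_1 = 1 and p_i ≥ 1 for all i. Set α_i := p_i / (Σ_{j=1}^ℓ p_j) for each i ∈ [ℓ]. For every fractional assignment x on V satisfying the LP fairness constraints (with these α_i), there exists a partition 𝒞 of V such that every cluster C ∈ 𝒞 with |C| ≥ 2 satisfies |V_i ∩ C| ≤ (1+ε)·α_i·|C| for every i ∈ [ℓ], and corr(𝒞) ≤ max{ (1/ε)·(Σ_{j=1}^ℓ p_j − 1) , 4 + 1/ε } · LP(E), where E is the set of all unordered pairs of distinct vertices. -/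
open Finset
open scoped Classical

variable {V : Type*}

namespace FairCC

/-- LP share on ordered pairs. -/
noncomputable def L (f : FracAssign V) (sign : Sym2 V → Bool) (u v : V) : ℝ :=
  if u = v then 0 else if sign s(u, v) then f.x u v else 1 - f.x u v

/-- Indicator of positive ordered pairs. -/
noncomputable def P (sign : Sym2 V → Bool) (u v : V) : ℝ :=
  if u = v then 0 else if sign s(u, v) then 1 else 0

/-- Indicator of negative ordered pairs. -/
noncomputable def N (sign : Sym2 V → Bool) (u v : V) : ℝ :=
  if u = v then 0 else if sign s(u, v) then 0 else 1

/-- Disagreement on ordered pairs. -/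
noncomputable def D (sign : Sym2 V → Bool) (𝒞 : Finset (Finset V)) (u v : V) : ℝ :=
  if u = v then 0 else
    if (if sign s(u, v) then ¬ sameCluster 𝒞 s(u, v) else sameCluster 𝒞 s(u, v)) then 1 else 0

theorem L_symm (f : FracAssign V) (sign : Sym2 V → Bool) (u v : V) :
    L f sign u v = L f sign v u := by
  unfold L
  rw [Sym2.eq_swap, f.symm u v]
  simp only [eq_comm]

theorem D_symm (sign : Sym2 V → Bool) (𝒞 : Finset (Finset V)) (u v : V) :
    D sign 𝒞 u v = D sign 𝒞 v u := by
  unfold D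
  rw [Sym2.eq_swap]
  simp only [eq_comm]

theorem L_nonneg (f : FracAssign V) (sign : Sym2 V → Bool) (u v : V) : 0 ≤ L f sign u v := by
  unfold L
  have := f.nonneg u v
  have := f.le_one u v
  split_ifs <;> linarith

theorem same_mk (𝒞 : Finset (Finset V)) (u v : V) :
    sameCluster 𝒞 s(u, v) ↔ ∃ C ∈ 𝒞, u ∈ C ∧ v ∈ C := by
  simp [sameCluster]

theorem D_of_same (sign : Sym2 V → Bool) (𝒞 : Finset (Finset V)) (u v : V)
    (h : sameCluster 𝒞 s(u, v)) : D sign 𝒞 u v = N sign u v := by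
  unfold D N
  by_cases h1 : u = v
  · simp only [h1, if_true]
  · by_cases h2 : sign s(u, v) = true <;> simp [h1, h2, h]

theorem D_of_not_same (sign : Sym2 V → Bool) (𝒞 : Finset (Finset V)) (u v : V)
    (h : ¬ sameCluster 𝒞 s(u, v)) : D sign 𝒞 u v = P sign u v := by
  unfold D P
  by_cases h1 : u = v
  · simp only [h1, if_true]
  · by_cases h2 : sign s(u, v) = true <;> simp [h1, h2, h]

theorem two_sum_pairs [Fintype V] [DecidableEq V] (g : Sym2 V → ℝ) :
    ∑ u : V, ∑ v : V, (if u = v then 0 else g s(u, v)) = 2 * ∑ e ∈ allPairs V, g e := by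
  rw [← Finset.sum_product' (f := fun u v => if u = v then 0 else g s(u, v))]
  have h1 : ∑ q ∈ (univ : Finset V) ×ˢ (univ : Finset V),
      (if q.1 = q.2 then 0 else g s(q.1, q.2)) =
      ∑ q ∈ (univ : Finset (V × V)).filter (fun q => q.1 ≠ q.2), g s(q.1, q.2) := by
    rw [Finset.sum_filter]
    apply Finset.sum_congr (by ext; simp)
    intro q _
    by_cases h : q.1 = q.2 <;> simp [h]
  rw [h1, ← Finset.sum_fiberwise_of_maps_to (t := allPairs V) (g := fun q : V × V => s(q.1, q.2))
    (by intro q hq; simpa [allPairs] using hq), Finset.mul_sum]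
  apply Finset.sum_congr rfl
  intro e he
  induction e using Sym2.ind with
  | _ a b =>
    have hab : a ≠ b := by simpa [allPairs] using he
    have h2 : ((univ : Finset (V × V)).filter (fun q => q.1 ≠ q.2)).filter
        (fun q => s(q.1, q.2) = s(a, b)) = {(a, b), (b, a)} := by
      ext ⟨c, d⟩
      simp only [mem_filter, mem_univ, true_and, mem_insert, mem_singleton, Sym2.eq_iff,
        Prod.mk.injEq]
      constructor
      · exact fun h => h.2
      · rintro (⟨rfl, rfl⟩ | ⟨rfl, rfl⟩)
        · exact ⟨hab, Or.inl ⟨rfl, rfl⟩⟩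
        · exact ⟨hab.symm, Or.inr ⟨rfl, rfl⟩⟩
    rw [h2, Finset.sum_pair (by simp [hab])]
    rw [Sym2.eq_swap (a := b)]
    ring

theorem two_LP [Fintype V] [DecidableEq V] (f : FracAssign V) (sign : Sym2 V → Bool) :
    ∑ u : V, ∑ v : V, L f sign u v = 2 * LPcost f sign (allPairs V) := by
  unfold LPcost
  rw [← two_sum_pairs]
  refine Finset.sum_congr rfl (fun u _ => Finset.sum_congr rfl (fun v _ => ?_))
  unfold L
  by_cases h : u = v
  · simp [h]
  · simp [h, FracAssign.val]

theorem two_corr [Fintype V] [DecidableEq V] (sign : Sym2 V → Bool) (𝒞 : Finset (Finset V)) :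
    ∑ u : V, ∑ v : V, D sign 𝒞 u v = 2 * (corrCost sign 𝒞 (allPairs V) : ℝ) := by
  unfold corrCost
  rw [Finset.card_filter, Nat.cast_sum]
  simp only [Nat.cast_ite, Nat.cast_one, Nat.cast_zero]
  rw [← two_sum_pairs]
  refine Finset.sum_congr rfl (fun u _ => Finset.sum_congr rfl (fun v _ => ?_))
  unfold D
  by_cases h : u = v
  · simp only [h, if_true]
  · simp only [h, if_false]

/-- If `C` is unfair for some colour, its size is bounded by LP-type quantities at any `u`. -/
theorem unfair_bound [Fintype V] [DecidableEq V] (f : FracAssign V) (W C : Finset V) (u : V)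
    (q S ε : ℝ) (hq : 1 ≤ q) (hqS : q ≤ S) (hε : 0 < ε)
    (hfair : ∑ v ∈ W, (1 - f.x u v) ≤ q / S * ∑ v : V, (1 - f.x u v))
    (hun : (1 + ε) * (q / S) * C.card < ((W ∩ C).card : ℝ)) :
    (C.card : ℝ) ≤ (1 / ε) * ((S - 1) * ∑ v ∈ C, f.x u v + ∑ v ∈ Cᶜ, (1 - f.x u v)) := by
  have hS : 0 < S := by linarith
  set α := q / S with hα
  have hα0 : 0 < α := by positivity
  have hα1 : α ≤ 1 := by rw [hα, div_le_one hS]; exact hqS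
  have hαS : 1 ≤ α * S := by rw [hα, div_mul_cancel₀ _ hS.ne']; exact hq
  have e1 : ∑ v : V, (1 - f.x u v) = ∑ v ∈ C, (1 - f.x u v) + ∑ v ∈ Cᶜ, (1 - f.x u v) :=
    (Finset.sum_add_sum_compl C _).symm
  have e2 : ∑ v ∈ C, (1 - f.x u v) = C.card - ∑ v ∈ C, f.x u v := by
    rw [Finset.sum_sub_distrib]; simp
  have e3 : ∑ v ∈ W ∩ C, (1 - f.x u v) = (W ∩ C).card - ∑ v ∈ W ∩ C, f.x u v := by
    rw [Finset.sum_sub_distrib]; simp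
  have e4 : ∑ v ∈ W ∩ C, (1 - f.x u v) ≤ ∑ v ∈ W, (1 - f.x u v) :=
    Finset.sum_le_sum_of_subset_of_nonneg Finset.inter_subset_left
      (fun v _ _ => by linarith [f.le_one u v])
  have e5 : ∑ v ∈ W ∩ C, f.x u v ≤ ∑ v ∈ C, f.x u v :=
    Finset.sum_le_sum_of_subset_of_nonneg Finset.inter_subset_right
      (fun v _ _ => f.nonneg u v)
  have hX : 0 ≤ ∑ v ∈ C, f.x u v := Finset.sum_nonneg (fun v _ => f.nonneg u v)
  rw [e1, e2] at hfair
  set X := ∑ v ∈ C, f.x u v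
  set Y := ∑ v ∈ Cᶜ, (1 - f.x u v)
  have key : ε * α * C.card ≤ (1 - α) * X + α * Y := by nlinarith
  have key2 : α * (ε * C.card) ≤ α * ((S - 1) * X + Y) := by nlinarith
  have key3 := le_of_mul_le_mul_left key2 hα0
  rw [one_div, inv_mul_eq_div, le_div_iff₀ hε]
  linarith

/-- negative pairs inside a dense ball -/
theorem inside_bound [DecidableEq V] (f : FracAssign V) (sign : Sym2 V → Bool) (u : V)
    (C : Finset V) (hC : ∀ v ∈ C, f.x u v ≤ 1 / 2)
    (hd : 4 * ∑ v ∈ C, f.x u v ≤ C.card) :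
    ∑ v ∈ C, ∑ w ∈ C, N sign v w ≤ 4 * ∑ v ∈ C, ∑ w ∈ C, L f sign v w := by
  let I : V → ℝ := fun v => if 1 / 4 ≤ f.x u v then 1 else 0
  have key : ∀ v ∈ C, ∀ w ∈ C, I w * (1 - 4 * f.x u v) + I v * (1 - 4 * f.x u w) ≤
      4 * L f sign v w - N sign v w := by
    intro v hv w hw
    have h1 := f.triangle u v w
    have h2 := f.triangle u w v
    have h3 := f.triangle v u w
    rw [f.symm w v] at h2
    rw [f.symm v u] at h3
    have h4 := hC v hv
    have h5 := hC w hw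
    have h6 := f.nonneg v w
    have h7 := f.nonneg u v
    have h8 := f.nonneg u w
    have h9 := f.le_one v w
    by_cases hvw : v = w
    · subst hvw
      simp only [I, L, N]
      split_ifs <;> simp_all <;> linarith
    · simp only [I, L, N, hvw, if_false]
      split_ifs <;> linarith
  have hT : 0 ≤ ∑ v ∈ C, (1 - 4 * f.x u v) := by
    rw [Finset.sum_sub_distrib, ← Finset.mul_sum]; simpa using hd
  have hI : ∀ v, 0 ≤ I v := by intro v; simp only [I]; split_ifs <;> norm_num
  have s1 : 0 ≤ ∑ v ∈ C, ∑ w ∈ C, I v * (1 - 4 * f.x u w) := by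
    apply Finset.sum_nonneg
    intro v _
    rw [← Finset.mul_sum]
    exact mul_nonneg (hI v) hT
  have s2 : 0 ≤ ∑ v ∈ C, ∑ w ∈ C, I w * (1 - 4 * f.x u v) := by
    rw [Finset.sum_comm]; exact s1
  have s3 := Finset.sum_le_sum (fun v hv => Finset.sum_le_sum (key v hv))
  simp only [Finset.sum_add_distrib, Finset.sum_sub_distrib, ← Finset.mul_sum] at s1 s2 s3
  linarith

/-- pairs leaving a dense ball -/
theorem outside_bound [DecidableEq V] (f : FracAssign V) (sign : Sym2 V → Bool) (u w : V)
    (C : Finset V) (hC : ∀ v ∈ C, f.x u v ≤ 1 / 2) (t : ℝ) (ht : 0 < t)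
    (hd : (4 + t) * ∑ v ∈ C, f.x u v ≤ C.card) (hw : 1 / 2 ≤ f.x u w) (hwC : w ∉ C) :
    ∑ v ∈ C, (P sign w v + t / 2 * (1 - f.x w v)) ≤ (4 + t) * ∑ v ∈ C, L f sign w v := by
  set d := f.x u w with hdd
  set A := 4 + 3 * t / 2 with hA
  set B := 1 + t / 2 with hB
  have hBpos : 0 < B := by positivity
  have hd1 : d ≤ 1 := f.le_one u w
  have hT : 0 ≤ ∑ v ∈ C, (1 - (4 + t) * f.x u v) := by
    rw [Finset.sum_sub_distrib, ← Finset.mul_sum]; simpa using hd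
  -- facts per vertex
  have facts : ∀ v ∈ C, (A * (d - f.x u v) - B ≤
        (4 + t) * L f sign w v - (P sign w v + t / 2 * (1 - f.x w v))) ∨
      (0 ≤ (4 + t) * L f sign w v - (P sign w v + t / 2 * (1 - f.x w v)) ∧
       (4 + t / 2) * (1 - d - f.x u v) ≤
        (4 + t) * L f sign w v - (P sign w v + t / 2 * (1 - f.x w v))) := by
    intro v hv
    have hne : w ≠ v := fun h => hwC (h ▸ hv)
    have h1 := f.triangle u v w
    have h3 := f.triangle w u v
    rw [f.symm v w] at h1
    rw [f.symm w u] at h3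
    have h9 := f.le_one w v
    simp only [L, P, hne, if_false]
    split_ifs
    · left
      rw [hA, hB]
      nlinarith
    · right
      constructor <;> nlinarith
  have hsuff : ∀ c : ℝ, 0 ≤ c → (∀ v ∈ C, c * (1 - (4 + t) * f.x u v) ≤
      B * ((4 + t) * L f sign w v - (P sign w v + t / 2 * (1 - f.x w v)))) →
      ∑ v ∈ C, (P sign w v + t / 2 * (1 - f.x w v)) ≤ (4 + t) * ∑ v ∈ C, L f sign w v := by
    intro c hc h
    have := Finset.sum_le_sum h
    rw [← Finset.mul_sum, ← Finset.mul_sum] at this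
    have h2 := mul_nonneg hc hT
    have h3 := le_trans h2 this
    have h4 := nonneg_of_mul_nonneg_right h3 hBpos
    rw [Finset.sum_sub_distrib, ← Finset.mul_sum] at h4
    linarith
  by_cases hcase : B ≤ A * (d - 1 / 2)
  · apply hsuff 0 le_rfl
    intro v hv
    rw [zero_mul]
    apply mul_nonneg hBpos.le
    rcases facts v hv with h | h
    · have := hC v hv
      have hApos : 0 < A := by positivity
      nlinarith
    · exact h.1
  · push Not at hcase
    apply hsuff (B - A * (d - 1 / 2)) (by linarith)
    intro v hv
    have hx0 := f.nonneg u v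
    have hx1 := hC v hv
    set y := f.x u v
    set e := d - 1 / 2 with he
    have hed : d = e + 1 / 2 := by rw [he]; ring
    have he0 : 0 ≤ e := by linarith
    have hApos : 0 < A := by positivity
    rcases facts v hv with h | h
    · refine le_trans ?_ (mul_le_mul_of_nonneg_left h hBpos.le)
      -- linear in y: endpoints
      have h0 : (B - A * e) ≤ B * (A * d - B) := by
        rw [hed]
        have : B * (A * (1 / 2) - B) ≥ B * 1 := by
          apply mul_le_mul_of_nonneg_left _ hBpos.le
          rw [hA, hB]; linarith
        have : 0 ≤ A * e := by positivity
        nlinarith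
      have h1 : (B - A * e) * (1 - (4 + t) / 2) ≤ B * (A * (d - 1 / 2) - B) := by
        rw [← he]
        have : 1 - (4 + t) / 2 = - B := by rw [hB]; ring
        rw [this]; nlinarith
      have m0 := mul_le_mul_of_nonneg_left h0 (by linarith : 0 ≤ 1 - 2 * y)
      have m1 := mul_le_mul_of_nonneg_left h1 (by linarith : 0 ≤ 2 * y)
      have := add_le_add m0 m1
      ring_nf at this ⊢
      linarith
    · have hc0 : 0 ≤ B - A * e := by linarith
      by_cases hy : 1 ≤ (4 + t) * y
      · have : (B - A * e) * (1 - (4 + t) * y) ≤ 0 :=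
          mul_nonpos_of_nonneg_of_nonpos hc0 (by linarith)
        exact le_trans this (mul_nonneg hBpos.le h.1)
      · push Not at hy
        refine le_trans ?_ (mul_le_mul_of_nonneg_left h.2 hBpos.le)
        -- endpoints y = 0 and (4+t) y = 1
        have h0 : (B - A * e) ≤ B * ((4 + t / 2) * (1 - d)) := by
          rw [hed]
          -- linear in e on [0, B/A]
          have hz : A * (B - A * e) ≤ A * (B * ((4 + t / 2) * (1 - (e + 1 / 2)))) := by
            have g0 : 0 ≤ B - A * e := hc0
            have g1 : A * (1 / 2 - e) = (B - A * e) + (1 + t / 4) := by rw [hA, hB]; ring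
            have g2 : A * (B * ((4 + t / 2) * (1 - (e + 1 / 2)))) =
                B * (4 + t / 2) * ((B - A * e) + (1 + t / 4)) := by rw [← g1]; ring
            rw [g2]
            have g3 : A * (B - A * e) ≤ A * (B - A * e) + 0 := by linarith
            have g4 : A ≤ B * (4 + t / 2) := by rw [hA, hB]; nlinarith
            have g5 : 0 ≤ B * (4 + t / 2) * (1 + t / 4) := by positivity
            nlinarith
          exact le_of_mul_le_mul_left hz hApos
        have h1 : 0 ≤ B * ((4 + t / 2) * ((4 + t) * (1 - d) - 1)) := by
          apply mul_nonneg hBpos.le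
          apply mul_nonneg (by positivity)
          rw [hed]
          have : 0 ≤ A * ((4 + t) * (1 - (e + 1 / 2)) - 1) := by
            have g1 : A * (1 / 2 - e) = (B - A * e) + (1 + t / 4) := by rw [hA, hB]; ring
            have g2 : A * ((4 + t) * (1 - (e + 1 / 2)) - 1) =
              (4 + t) * ((B - A * e) + (1 + t / 4)) - A := by rw [← g1]; ring
            rw [g2]
            have g3 : A ≤ (4 + t) * (1 + t / 4) := by rw [hA]; nlinarith
            have : 0 ≤ (4 + t) * (B - A * e) := by positivity
            nlinarith
          exact nonneg_of_mul_nonneg_right this hApos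
        have m0 := mul_le_mul_of_nonneg_left h0 (by linarith : 0 ≤ 1 - (4 + t) * y)
        have m1 := mul_nonneg hx0 h1
        ring_nf at m0 m1 ⊢
        linarith

theorem residual_bound [Fintype V] [DecidableEq V] (f : FracAssign V) (sign : Sym2 V → Bool)
    (Good : Finset V → Prop) (t S K : ℝ) (ht : 0 < t) (hK1 : 4 + t ≤ K) (hK2 : t * (S - 1) ≤ K)
    (hun : ∀ C u, ¬ Good C → (C.card : ℝ) ≤
      t * ((S - 1) * ∑ v ∈ C, f.x u v + ∑ v ∈ Cᶜ, (1 - f.x u v)))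
    (R : Finset V) (u : V)
    (hR : ¬ ((4 + t) * ∑ v ∈ R.filter (fun v => f.x u v ≤ 1 / 2), f.x u v ≤
        (R.filter (fun v => f.x u v ≤ 1 / 2)).card ∧
      Good (R.filter (fun v => f.x u v ≤ 1 / 2)))) :
    ∑ v ∈ R, P sign u v ≤ K * ∑ v ∈ R, L f sign u v + t * ∑ v ∈ Rᶜ, (1 - f.x u v) := by
  set C := R.filter (fun v => f.x u v ≤ 1 / 2) with hC
  set F := R.filter (fun v => ¬ f.x u v ≤ 1 / 2) with hF
  have split : ∀ g : V → ℝ, ∑ v ∈ R, g v = ∑ v ∈ C, g v + ∑ v ∈ F, g v := fun g =>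
    (Finset.sum_filter_add_sum_filter_not R _ g).symm
  have hCR : C ⊆ R := Finset.filter_subset _ _
  have splitc : ∑ v ∈ Cᶜ, (1 - f.x u v) = ∑ v ∈ F, (1 - f.x u v) + ∑ v ∈ Rᶜ, (1 - f.x u v) := by
    have a1 := Finset.sum_add_sum_compl C (fun v => 1 - f.x u v)
    have a2 := Finset.sum_add_sum_compl R (fun v => 1 - f.x u v)
    have a3 := split (fun v => 1 - f.x u v)
    linarith
  have hRc : 0 ≤ t * ∑ v ∈ Rᶜ, (1 - f.x u v) :=
    mul_nonneg ht.le (Finset.sum_nonneg (fun v _ => by linarith [f.le_one u v]))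
  have hPC : ∑ v ∈ C, P sign u v ≤ C.card := by
    have : ∑ v ∈ C, P sign u v ≤ ∑ v ∈ C, (1 : ℝ) := by
      apply Finset.sum_le_sum
      intro v _
      unfold P
      split_ifs <;> norm_num
    simpa using this
  have hX0 : 0 ≤ ∑ v ∈ C, f.x u v := Finset.sum_nonneg (fun v _ => f.nonneg u v)
  have hLC : ∑ v ∈ C, f.x u v ≤ ∑ v ∈ C, L f sign u v := by
    apply Finset.sum_le_sum
    intro v hv
    have h1 : f.x u v ≤ 1 / 2 := (Finset.mem_filter.mp hv).2
    unfold L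
    split_ifs with h h'
    · rw [h, f.diag]
    · exact le_rfl
    · linarith
  have hFb : ∑ v ∈ F, P sign u v + t * ∑ v ∈ F, (1 - f.x u v) ≤ K * ∑ v ∈ F, L f sign u v := by
    rw [Finset.mul_sum, Finset.mul_sum, ← Finset.sum_add_distrib]
    apply Finset.sum_le_sum
    intro v hv
    have h1 : 1 / 2 < f.x u v := not_le.mp (Finset.mem_filter.mp hv).2
    have h2 := f.le_one u v
    have hL := L_nonneg f sign u v
    refine le_trans ?_ (mul_le_mul_of_nonneg_right hK1 hL)
    unfold P L
    split_ifs with h h'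
    · rw [h, f.diag] at h1; norm_num at h1
    · nlinarith
    · nlinarith
  have hF0 : 0 ≤ t * ∑ v ∈ F, (1 - f.x u v) :=
    mul_nonneg ht.le (Finset.sum_nonneg (fun v _ => by linarith [f.le_one u v]))
  have hK0 : 0 ≤ K := by linarith
  have hLC' := mul_le_mul_of_nonneg_left hLC hK0
  rw [split, split]
  by_cases hd : (4 + t) * ∑ v ∈ C, f.x u v ≤ C.card
  · have hg : ¬ Good C := fun h => hR ⟨hd, h⟩
    have h1 := hun C u hg
    rw [splitc] at h1
    have h2 := mul_le_mul_of_nonneg_right hK2 hX0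
    nlinarith
  · push Not at hd
    have h2 := mul_le_mul_of_nonneg_right hK1 hX0
    nlinarith

theorem main_ind [Fintype V] [DecidableEq V] (f : FracAssign V) (sign : Sym2 V → Bool)
    (Good : Finset V → Prop) (t S K : ℝ) (ht : 0 < t) (hK1 : 4 + t ≤ K) (hK2 : t * (S - 1) ≤ K)
    (hun : ∀ C u, ¬ Good C → (C.card : ℝ) ≤
      t * ((S - 1) * ∑ v ∈ C, f.x u v + ∑ v ∈ Cᶜ, (1 - f.x u v)))
    (R : Finset V) :
    ∃ 𝒞 : Finset (Finset V), (∀ C ∈ 𝒞, C.Nonempty ∧ C ⊆ R ∧ (2 ≤ C.card → Good C)) ∧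
      (∀ C ∈ 𝒞, ∀ C' ∈ 𝒞, C ≠ C' → Disjoint C C') ∧
      (∀ v ∈ R, ∃ C ∈ 𝒞, v ∈ C) ∧
      ∑ u ∈ R, ∑ v ∈ R, D sign 𝒞 u v ≤ K * ∑ u ∈ R, ∑ v ∈ R, L f sign u v +
        t * ∑ u ∈ R, ∑ v ∈ Rᶜ, (1 - f.x u v) := by
  induction R using Finset.strongInduction with
  | H R ih =>
  by_cases hex : ∃ u ∈ R, (4 + t) * ∑ v ∈ R.filter (fun v => f.x u v ≤ 1 / 2), f.x u v ≤
        (R.filter (fun v => f.x u v ≤ 1 / 2)).card ∧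
      Good (R.filter (fun v => f.x u v ≤ 1 / 2))
  · obtain ⟨u, hu, hdense, hgood⟩ := hex
    set C := R.filter (fun v => f.x u v ≤ 1 / 2) with hC
    have hCR : C ⊆ R := Finset.filter_subset _ _
    have huC : u ∈ C := by
      rw [hC, Finset.mem_filter, f.diag]; exact ⟨hu, by norm_num⟩
    have hCx : ∀ v ∈ C, f.x u v ≤ 1 / 2 := fun v hv => (Finset.mem_filter.mp hv).2
    have hss : R \ C ⊂ R := by
      refine Finset.ssubset_iff_subset_ne.mpr ⟨Finset.sdiff_subset, fun h => ?_⟩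
      have : u ∈ R \ C := by rw [h]; exact hu
      exact (Finset.mem_sdiff.mp this).2 huC
    obtain ⟨𝒞, h1, h2, h3, h4⟩ := ih (R \ C) hss
    set R' := R \ C with hR'
    have hdis : Disjoint C R' := Finset.disjoint_sdiff
    have hdisC : ∀ C' ∈ 𝒞, Disjoint C C' := fun C' hC' =>
      Finset.disjoint_of_subset_right (h1 C' hC').2.1 hdis
    refine ⟨insert C 𝒞, ?_, ?_, ?_, ?_⟩
    · intro C' hC'
      rcases Finset.mem_insert.mp hC' with rfl | h
      · exact ⟨⟨u, huC⟩, hCR, fun _ => hgood⟩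
      · obtain ⟨a, b, c⟩ := h1 C' h
        exact ⟨a, b.trans Finset.sdiff_subset, c⟩
    · intro A hA B hB hAB
      rcases Finset.mem_insert.mp hA with hA | hA <;> rcases Finset.mem_insert.mp hB with hB | hB
      · exact absurd (hA.trans hB.symm) hAB
      · rw [hA]; exact hdisC B hB
      · rw [hB]; exact (hdisC A hA).symm
      · exact h2 A hA B hB hAB
    · intro v hv
      by_cases hvC : v ∈ C
      · exact ⟨C, Finset.mem_insert_self _ _, hvC⟩
      · obtain ⟨A, hA, hvA⟩ := h3 v (Finset.mem_sdiff.mpr ⟨hv, hvC⟩)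
        exact ⟨A, Finset.mem_insert_of_mem hA, hvA⟩
    · have splitR : ∀ g : V → ℝ, ∑ v ∈ R, g v = ∑ v ∈ C, g v + ∑ v ∈ R', g v := by
        intro g
        rw [add_comm]
        exact (Finset.sum_sdiff hCR).symm
      have split2 : ∀ g : V → V → ℝ, (∀ a b, g a b = g b a) → ∑ a ∈ R, ∑ b ∈ R, g a b =
          ∑ a ∈ C, ∑ b ∈ C, g a b + 2 * ∑ a ∈ R', ∑ b ∈ C, g a b +
            ∑ a ∈ R', ∑ b ∈ R', g a b := by
        intro g hg
        have e : ∑ a ∈ C, ∑ b ∈ R', g a b = ∑ a ∈ R', ∑ b ∈ C, g a b := by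
          rw [Finset.sum_comm]
          exact Finset.sum_congr rfl (fun a _ => Finset.sum_congr rfl (fun b _ => hg b a))
        simp only [splitR, Finset.sum_add_distrib]
        rw [e]; ring
      rw [split2 _ (D_symm sign _), split2 _ (L_symm f sign)]
      have d1 : ∑ a ∈ C, ∑ b ∈ C, D sign (insert C 𝒞) a b = ∑ a ∈ C, ∑ b ∈ C, N sign a b := by
        refine Finset.sum_congr rfl (fun a ha => Finset.sum_congr rfl (fun b hb => ?_))
        have hs : sameCluster (insert C 𝒞) s(a, b) := by
          rw [same_mk]; exact ⟨C, Finset.mem_insert_self _ _, ha, hb⟩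
        exact D_of_same sign _ a b hs
      have d2 : ∑ a ∈ R', ∑ b ∈ C, D sign (insert C 𝒞) a b = ∑ a ∈ R', ∑ b ∈ C, P sign a b := by
        refine Finset.sum_congr rfl (fun a ha => Finset.sum_congr rfl (fun b hb => ?_))
        have hs : ¬ sameCluster (insert C 𝒞) s(a, b) := by
          rw [same_mk]
          rintro ⟨A, hA, haA, hbA⟩
          rcases Finset.mem_insert.mp hA with hA | hA
          · rw [hA] at haA
            exact (Finset.mem_sdiff.mp ha).2 haA
          · exact Finset.disjoint_left.mp (hdisC A hA) hb hbA
        exact D_of_not_same sign _ a b hs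
      have d3 : ∑ a ∈ R', ∑ b ∈ R', D sign (insert C 𝒞) a b =
          ∑ a ∈ R', ∑ b ∈ R', D sign 𝒞 a b := by
        refine Finset.sum_congr rfl (fun a ha => Finset.sum_congr rfl (fun b hb => ?_))
        have hs : sameCluster (insert C 𝒞) s(a, b) ↔ sameCluster 𝒞 s(a, b) := by
          rw [same_mk, same_mk]
          constructor
          · rintro ⟨A, hA, haA, hbA⟩
            rcases Finset.mem_insert.mp hA with hA | hA
            · rw [hA] at haA
              exact absurd haA (Finset.mem_sdiff.mp ha).2
            · exact ⟨A, hA, haA, hbA⟩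
          · rintro ⟨A, hA, h⟩
            exact ⟨A, Finset.mem_insert_of_mem hA, h⟩
        by_cases hs' : sameCluster 𝒞 s(a, b)
        · rw [D_of_same _ _ _ _ hs', D_of_same _ _ _ _ (hs.mpr hs')]
        · rw [D_of_not_same _ _ _ _ hs', D_of_not_same _ _ _ _ (fun h => hs' (hs.mp h))]
      rw [d1, d2, d3]
      have b1 := inside_bound f sign u C hCx (by
        have : 0 ≤ ∑ v ∈ C, f.x u v := Finset.sum_nonneg (fun v _ => f.nonneg u v)
        nlinarith)
      have b2 : ∑ w ∈ R', ∑ v ∈ C, P sign w v + t / 2 * ∑ w ∈ R', ∑ v ∈ C, (1 - f.x w v) ≤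
          (4 + t) * ∑ w ∈ R', ∑ v ∈ C, L f sign w v := by
        rw [Finset.mul_sum, Finset.mul_sum, ← Finset.sum_add_distrib]
        apply Finset.sum_le_sum
        intro w hw
        obtain ⟨hwR, hwC⟩ := Finset.mem_sdiff.mp hw
        have hx : 1 / 2 ≤ f.x u w := by
          by_contra hlt
          exact hwC (Finset.mem_filter.mpr ⟨hwR, (not_le.mp hlt).le⟩)
        have := outside_bound f sign u w C hCx t ht hdense hx hwC
        rwa [Finset.sum_add_distrib, ← Finset.mul_sum] at this
      have b3 : ∑ w ∈ R', ∑ v ∈ R'ᶜ, (1 - f.x w v) ≤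
          ∑ w ∈ R', ∑ v ∈ C, (1 - f.x w v) + ∑ w ∈ R, ∑ v ∈ Rᶜ, (1 - f.x w v) := by
        have e : ∀ w, ∑ v ∈ R'ᶜ, (1 - f.x w v) =
            ∑ v ∈ C, (1 - f.x w v) + ∑ v ∈ Rᶜ, (1 - f.x w v) := by
          intro w
          have a1 := Finset.sum_add_sum_compl R' (fun v => 1 - f.x w v)
          have a2 := Finset.sum_add_sum_compl R (fun v => 1 - f.x w v)
          have a3 := splitR (fun v => 1 - f.x w v)
          linarith
        simp only [e, Finset.sum_add_distrib]
        have : ∑ w ∈ R', ∑ v ∈ Rᶜ, (1 - f.x w v) ≤ ∑ w ∈ R, ∑ v ∈ Rᶜ, (1 - f.x w v) :=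
          Finset.sum_le_sum_of_subset_of_nonneg Finset.sdiff_subset
            (fun w _ _ => Finset.sum_nonneg (fun v _ => by linarith [f.le_one w v]))
        linarith
      have b3' := mul_le_mul_of_nonneg_left b3 ht.le
      have p1 : 0 ≤ ∑ a ∈ C, ∑ b ∈ C, L f sign a b :=
        Finset.sum_nonneg (fun a _ => Finset.sum_nonneg (fun b _ => L_nonneg f sign a b))
      have p2 : 0 ≤ ∑ a ∈ R', ∑ b ∈ C, L f sign a b :=
        Finset.sum_nonneg (fun a _ => Finset.sum_nonneg (fun b _ => L_nonneg f sign a b))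
      have q1 := mul_le_mul_of_nonneg_right hK1 p1
      have q2 := mul_le_mul_of_nonneg_right hK1 p2
      have q3 := mul_nonneg ht.le p1
      linarith
  · push Not at hex
    refine ⟨R.image (fun v => {v}), ?_, ?_, ?_, ?_⟩
    · intro C hC
      obtain ⟨v, hv, rfl⟩ := Finset.mem_image.mp hC
      exact ⟨Finset.singleton_nonempty v, Finset.singleton_subset_iff.mpr hv, by simp⟩
    · intro C hC C' hC' hne
      obtain ⟨v, hv, rfl⟩ := Finset.mem_image.mp hC
      obtain ⟨w, hw, rfl⟩ := Finset.mem_image.mp hC'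
      rw [Finset.disjoint_singleton]
      rintro rfl
      exact hne rfl
    · intro v hv
      exact ⟨{v}, Finset.mem_image_of_mem _ hv, Finset.mem_singleton_self v⟩
    · have d : ∀ a b, D sign (R.image (fun v => ({v} : Finset V))) a b ≤ P sign a b := by
        intro a b
        unfold D P
        by_cases hab : a = b
        · simp [hab]
        · have hs : ¬ sameCluster (R.image (fun v => ({v} : Finset V))) s(a, b) := by
            rw [same_mk]
            rintro ⟨A, hA, haA, hbA⟩
            obtain ⟨v, hv, rfl⟩ := Finset.mem_image.mp hA
            rw [Finset.mem_singleton] at haA hbA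
            exact hab (haA.trans hbA.symm)
          split_ifs <;> simp_all
      refine le_trans (Finset.sum_le_sum (fun a _ => Finset.sum_le_sum (fun b _ => d a b))) ?_
      rw [Finset.mul_sum, Finset.mul_sum, ← Finset.sum_add_distrib]
      apply Finset.sum_le_sum
      intro u hu
      exact residual_bound f sign Good t S K ht hK1 hK2 hun R u
        (fun h => hex u hu h.1 h.2)

end FairCC

/-- The proportional-fairness special case with
`α i = p i / ∑ j, p j`, `p 1 = 1`, giving the bound
`max ((1/ε)·(∑ p - 1)) (4 + 1/ε)`. -/
theorem fair_correlation_clustering_proportional {V : Type*} [Fintype V] [DecidableEq V]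
    (sign : Sym2 V → Bool) {ℓ : ℕ} (hℓ : 2 ≤ ℓ)
    (Vc : Fin ℓ → Finset V) (p : Fin ℓ → ℝ)
    (hp1 : p ⟨0, by omega⟩ = 1) (hp : ∀ i, 1 ≤ p i)
    (ε : ℝ) (hε : 0 < ε)
    (f : FracAssign V)
    (hfair : FairLP f Vc (fun i => p i / ∑ j, p j)) :
    ∃ 𝒞 : Finset (Finset V), IsPartition 𝒞 ∧
      (∀ C ∈ 𝒞, 2 ≤ C.card → ∀ i : Fin ℓ,
        ((Vc i ∩ C).card : ℝ) ≤ (1 + ε) * (p i / ∑ j, p j) * C.card) ∧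
      (corrCost sign 𝒞 (allPairs V) : ℝ) ≤
        max ((1 / ε) * ((∑ j, p j) - 1)) (4 + 1 / ε) *
          LPcost f sign (allPairs V) := by
  have hpS : ∀ i, p i ≤ ∑ j, p j := fun i =>
    Finset.single_le_sum (fun j _ => by linarith [hp j]) (Finset.mem_univ i)
  have ht : 0 < 1 / ε := by positivity
  obtain ⟨𝒞, h1, h2, h3, h4⟩ := FairCC.main_ind f sign
    (fun C => ∀ i : Fin ℓ, ((Vc i ∩ C).card : ℝ) ≤ (1 + ε) * (p i / ∑ j, p j) * C.card)
    (1 / ε) (∑ j, p j) (max ((1 / ε) * ((∑ j, p j) - 1)) (4 + 1 / ε)) ht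
    (le_max_right _ _) (le_max_left _ _)
    (by
      intro C u hC
      push Not at hC
      obtain ⟨i, hi⟩ := hC
      exact FairCC.unfair_bound f (Vc i) C u (p i) _ ε (hp i) (hpS i) hε (hfair u i) hi)
    Finset.univ
  refine ⟨𝒞, ⟨fun C hC => (h1 C hC).1, h2, fun v => h3 v (Finset.mem_univ v)⟩,
    fun C hC => (h1 C hC).2.2, ?_⟩
  rw [FairCC.two_LP, FairCC.two_corr] at h4
  simp only [Finset.compl_univ, Finset.sum_empty, Finset.sum_const_zero, mul_zero, add_zero] at h4
  linarith
end

section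
/- Let V be a finite vertex set with a complete signed graph, color classes V_1,…,V_ℓ ⊆ V, all fairness parameters α_i = 1/2, and let ε > 0. For every fractional assignment x on V satisfying the LP fairness constraints, there exists a partition 𝒞 of V such that every cluster C ∈ 𝒞 with |C| ≥ 2 satisfies |V_i ∩ C| ≤ (1+ε)·|C|/2 for every i ∈ [ℓ], and corr(𝒞) ≤ (4 + 1/ε) · LP(E), where E is the set of all unordered pairs of distinct vertices. -/
open Finset
open scoped Classical

variable {V : Type*}

section helpers

/-- ordered pair LP cost -/
noncomputable def pairL {V : Type*} (f : FracAssign V) (sign : Sym2 V → Bool) (u v : V) : ℝ :=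
  if u = v then 0 else if sign s(u, v) then f.x u v else 1 - f.x u v

/-- ordered pair disagreement cost of a labelling -/
noncomputable def pairD {V : Type*} (sign : Sym2 V → Bool) (c : V → V) (u v : V) : ℝ :=
  if u = v then 0 else
    if sign s(u, v) then (if c u = c v then 0 else 1) else (if c u = c v then 1 else 0)

lemma pairL_symm {V : Type*} (f : FracAssign V) (sign : Sym2 V → Bool) (u v : V) :
    pairL f sign u v = pairL f sign v u := by
  unfold pairL
  rw [Sym2.eq_swap, f.symm u v]
  simp only [eq_comm]

lemma pairD_symm {V : Type*} (sign : Sym2 V → Bool) (c : V → V) (u v : V) :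
    pairD sign c u v = pairD sign c v u := by
  unfold pairD
  rw [Sym2.eq_swap]
  simp only [eq_comm]

lemma sum_pairs_eq {V : Type*} [Fintype V] [DecidableEq V] (g : Sym2 V → ℝ) :
    ∑ u : V, ∑ v : V, (if u = v then 0 else g s(u, v)) = 2 * ∑ e ∈ allPairs V, g e := by
  have h1 : ∑ u : V, ∑ v : V, (if u = v then 0 else g s(u, v))
      = ∑ p ∈ (Finset.univ : Finset (V × V)).filter (fun p => p.1 ≠ p.2), g s(p.1, p.2) := by
    rw [Finset.sum_filter, ← Finset.univ_product_univ, Finset.sum_product]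
    refine Finset.sum_congr rfl fun u _ => Finset.sum_congr rfl fun v _ => ?_
    by_cases h : u = v <;> simp [h]
  rw [h1, ← Finset.sum_fiberwise_of_maps_to (t := allPairs V) (g := fun p : V × V => s(p.1, p.2)),
    Finset.mul_sum]
  · refine Finset.sum_congr rfl fun e he => ?_
    induction e using Sym2.ind with
    | _ a b =>
      have hab : a ≠ b := by simpa [allPairs] using he
      have : ((Finset.univ : Finset (V × V)).filter (fun p => p.1 ≠ p.2)).filter
          (fun p => s(p.1, p.2) = s(a, b)) = {(a, b), (b, a)} := by
        ext ⟨p, q⟩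
        simp only [Finset.mem_filter, Finset.mem_univ, true_and, Finset.mem_insert,
          Finset.mem_singleton, Prod.mk.injEq, Sym2.eq_iff]
        constructor
        · rintro ⟨_, h⟩; exact h
        · rintro (⟨rfl, rfl⟩ | ⟨rfl, rfl⟩)
          · exact ⟨hab, Or.inl ⟨rfl, rfl⟩⟩
          · exact ⟨hab.symm, Or.inr ⟨rfl, rfl⟩⟩
      rw [this, Finset.sum_pair (by simp [hab])]
      simp only [Sym2.eq_swap (a := b) (b := a)]
      ring
  · intro p hp
    simpa [allPairs] using hp

lemma dsum_split {V : Type*} [DecidableEq V] (g : V → V → ℝ) (hg : ∀ u v, g u v = g v u)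
    (S C : Finset V) (hC : C ⊆ S) :
    ∑ z ∈ S, ∑ v ∈ S, g z v = ∑ z ∈ C, ∑ v ∈ C, g z v
      + ∑ z ∈ S \ C, ∑ v ∈ S \ C, g z v + 2 * ∑ z ∈ S \ C, ∑ v ∈ C, g z v := by
  have hs : ∀ k : V → ℝ, ∑ v ∈ S, k v = ∑ v ∈ S \ C, k v + ∑ v ∈ C, k v := fun k =>
    (Finset.sum_sdiff hC).symm
  have hc : ∑ z ∈ C, ∑ v ∈ S \ C, g z v = ∑ z ∈ S \ C, ∑ v ∈ C, g z v := by
    rw [Finset.sum_comm]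
    exact Finset.sum_congr rfl fun _ _ => Finset.sum_congr rfl fun _ _ => hg _ _
  rw [hs]
  simp only [hs (g _), Finset.sum_add_distrib]
  rw [hc]; ring

/-- pointwise cross estimate, `h = 1/(2ε)`, `σ = 1/(4+2h)`. -/
lemma cross_pt (h σ d : ℝ) (hh : 0 ≤ h) (hσ : σ * (4 + 2 * h) = 1) (hd : 1 / 2 ≤ d) :
    ∃ κ : ℝ, 0 ≤ κ ∧ ∀ t x : ℝ, 0 ≤ t → t ≤ 1 / 2 → x ≤ 1 → d - t ≤ x → x ≤ d + t →
      (1 + h * (1 - x) - (4 + 2 * h) * x ≤ κ * (t - σ)) ∧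
      (h * (1 - x) - (4 + 2 * h) * (1 - x) ≤ κ * (t - σ)) := by
  have hσ0 : 0 < σ := by
    by_contra hc
    nlinarith
  have hσ4 : σ ≤ 1 / 4 := by nlinarith
  have hσh : σ * h = (1 - 4 * σ) / 2 := by linarith
  -- (4+3h)σ ≤ 1 + h/4
  have k1 : (4 + 3 * h) * σ ≤ 1 + h / 4 := by nlinarith [mul_nonneg hh hσ0.le]
  rcases le_total d (3 / 4) with hd1 | hd1
  · refine ⟨4 + 3 * h, by positivity, fun t x ht ht2 hx1 hx hx' => ⟨?_, ?_⟩⟩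
    · nlinarith [mul_le_mul_of_nonneg_left hx (by positivity : 0 ≤ 4 + 3 * h),
        mul_le_mul_of_nonneg_left hd (by positivity : 0 ≤ 4 + 3 * h)]
    · nlinarith [mul_le_mul_of_nonneg_left hx' (by positivity : 0 ≤ 4 + h),
        mul_le_mul_of_nonneg_left hd1 (by positivity : 0 ≤ 4 + h), mul_nonneg hh ht]
  · rcases le_total d (1 - σ) with hd2 | hd2
    · refine ⟨4 + h, by positivity, fun t x ht ht2 hx1 hx hx' => ⟨?_, ?_⟩⟩
      · nlinarith [mul_le_mul_of_nonneg_left hx (by positivity : 0 ≤ 4 + 3 * h),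
          mul_le_mul_of_nonneg_left hd1 (by positivity : 0 ≤ 4 + 3 * h),
          mul_le_mul_of_nonneg_left ht2 hh, mul_nonneg hh hσ0.le]
      · nlinarith [mul_le_mul_of_nonneg_left hx' (by positivity : 0 ≤ 4 + h),
          mul_le_mul_of_nonneg_left hd2 (by positivity : 0 ≤ 4 + h)]
    · refine ⟨0, le_rfl, fun t x ht ht2 hx1 hx hx' => ⟨?_, ?_⟩⟩
      · have : 1 / 2 - σ ≤ x := by linarith
        nlinarith [mul_le_mul_of_nonneg_left this (by positivity : 0 ≤ 4 + 3 * h)]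
      · nlinarith [mul_nonneg hh (sub_nonneg.2 hx1)]

lemma internal_bound {V : Type*} [DecidableEq V] (f : FracAssign V) (sign : Sym2 V → Bool)
    (β : ℝ) (hβ : 4 ≤ β) (C : Finset V) (u : V) (hr : ∀ v ∈ C, f.x u v ≤ 1 / 2)
    (havg : ∑ v ∈ C, (f.x u v - 1 / β) ≤ 0) :
    ∑ z ∈ C, ∑ v ∈ C, (if z = v then 0 else if sign s(z, v) then 0 else (1 : ℝ))
      ≤ β * ∑ z ∈ C, ∑ v ∈ C, pairL f sign z v := by
  have hβ0 : 0 < β := by linarith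
  have hσ : β * (1 / β) = 1 := by field_simp
  set σ := 1 / β with hσdef
  have hσ0 : 0 < σ := by positivity
  set e : V → V → ℝ := fun z v =>
    (if z = v then 0 else if sign s(z, v) then 0 else (1 : ℝ)) - β * pairL f sign z v with he
  have hes : ∀ z v, e z v = e v z := by
    intro z v
    simp only [he]
    rw [pairL_symm, Sym2.eq_swap (a := z)]
    simp only [eq_comm]
  set ω : V → V → ℝ := fun z v =>
    if f.x u v < f.x u z then 1 else if f.x u v = f.x u z then 1 / 2 else 0 with hω
  have hω1 : ∀ z v, ω z v + ω v z = 1 := by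
    intro z v
    simp only [hω]
    rcases lt_trichotomy (f.x u v) (f.x u z) with h | h | h
    · simp [h, h.not_gt, h.ne']
    · simp [h]; norm_num
    · simp [h, h.not_gt, h.ne']
  have key : ∀ z ∈ C, ∑ v ∈ C, ω z v * e z v ≤ 0 := by
    intro z hz
    have hzr := hr z hz
    rcases le_or_gt (f.x u z) σ with hc | hc
    · refine Finset.sum_nonpos fun v hv => ?_
      by_cases hvz : f.x u v ≤ f.x u z
      · have hω0 : 0 ≤ ω z v := by simp only [hω]; split_ifs <;> norm_num
        refine mul_nonpos_of_nonneg_of_nonpos hω0 ?_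
        have h1 := f.triangle z u v
        rw [f.symm z u] at h1
        have h2 := f.nonneg z v
        simp only [he, pairL]
        split_ifs
        · simp
        · nlinarith
        · nlinarith
      · have : ω z v = 0 := by
          simp only [hω]
          rw [if_neg (by linarith), if_neg (by intro h; linarith)]
        rw [this, zero_mul]
    · have h1 : ∀ v ∈ C, ω z v * e z v ≤ β * (f.x u v - σ) := by
        intro v hv
        by_cases hzv : z = v
        · subst hzv
          have : e z z = 0 := by simp [he, pairL]
          rw [this, mul_zero]
          exact mul_nonneg hβ0.le (by linarith)
        · have hE : e z v ≤ β * (f.x u v - σ) := by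
            have h1 := f.triangle z u v
            rw [f.symm z u] at h1
            have h2 := f.triangle u v z
            rw [f.symm v z] at h2
            simp only [he, pairL, if_neg hzv]
            split_ifs
            · nlinarith
            · nlinarith
          simp only [hω]
          split_ifs with a b
          · linarith
          · have : 0 ≤ β * (f.x u v - σ) := mul_nonneg hβ0.le (by linarith)
            linarith
          · have : 0 ≤ β * (f.x u v - σ) := mul_nonneg hβ0.le (by
              have := not_lt.1 a; linarith)
            linarith
      refine (Finset.sum_le_sum h1).trans ?_
      rw [← Finset.mul_sum]
      exact mul_nonpos_of_nonneg_of_nonpos hβ0.le havg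
  have h2 : ∑ z ∈ C, ∑ v ∈ C, e z v = 2 * ∑ z ∈ C, ∑ v ∈ C, ω z v * e z v := by
    have h3 : ∑ z ∈ C, ∑ v ∈ C, ω z v * e z v = ∑ z ∈ C, ∑ v ∈ C, ω v z * e z v := by
      rw [Finset.sum_comm]
      exact Finset.sum_congr rfl fun _ _ => Finset.sum_congr rfl fun _ _ => by rw [hes]
    rw [two_mul]
    nth_rewrite 2 [h3]
    rw [← Finset.sum_add_distrib]
    refine Finset.sum_congr rfl fun z _ => ?_
    rw [← Finset.sum_add_distrib]
    refine Finset.sum_congr rfl fun v _ => ?_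
    rw [← add_mul, hω1, one_mul]
  have h4 : ∑ z ∈ C, ∑ v ∈ C, e z v ≤ 0 := by
    rw [h2]
    have := Finset.sum_nonpos key
    linarith
  simp only [he, Finset.sum_sub_distrib, ← Finset.mul_sum] at h4
  linarith

lemma cross_bound {V : Type*} [DecidableEq V] (f : FracAssign V) (sign : Sym2 V → Bool)
    (h σ : ℝ) (hh : 0 ≤ h) (hσ : σ * (4 + 2 * h) = 1)
    (C : Finset V) (u z : V) (hr : ∀ v ∈ C, f.x u v ≤ 1 / 2) (hz : z ∉ C)
    (hd : 1 / 2 ≤ f.x u z)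
    (havg : ∑ v ∈ C, (f.x u v - σ) ≤ 0) :
    ∑ v ∈ C, ((if sign s(z, v) then (1 : ℝ) else 0) + h * (1 - f.x z v))
      ≤ (4 + 2 * h) * ∑ v ∈ C, pairL f sign z v := by
  obtain ⟨κ, hκ, H⟩ := cross_pt h σ (f.x u z) hh hσ hd
  have h1 : ∀ v ∈ C, (if sign s(z, v) then (1 : ℝ) else 0) + h * (1 - f.x z v)
      - (4 + 2 * h) * pairL f sign z v ≤ κ * (f.x u v - σ) := by
    intro v hv
    have hzv : z ≠ v := fun hh => hz (hh ▸ hv)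
    have t1 := f.triangle z u v
    rw [f.symm z u] at t1
    have t2 := f.triangle u v z
    rw [f.symm v z] at t2
    obtain ⟨p, q⟩ := H (f.x u v) (f.x z v) (f.nonneg _ _) (hr v hv) (f.le_one _ _)
      (by linarith) (by linarith)
    simp only [pairL, if_neg hzv]
    split_ifs
    · linarith
    · linarith
  have h2 := Finset.sum_le_sum h1
  rw [← Finset.mul_sum, Finset.sum_sub_distrib, ← Finset.mul_sum] at h2
  have := mul_nonpos_of_nonneg_of_nonpos hκ havg
  linarith

/-- Fairness of a good ball. -/
lemma fair_ball {V : Type*} [Fintype V] [DecidableEq V] (f : FracAssign V) (ε : ℝ)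
    (A C : Finset V) (u : V)
    (hfair : ∑ v ∈ A, (1 - f.x u v) ≤ 1 / 2 * ∑ v : V, (1 - f.x u v))
    (hM : ∑ v ∈ C, f.x u v + ∑ v ∈ univ \ C, (1 - f.x u v) ≤ ε * C.card) :
    ((A ∩ C).card : ℝ) ≤ (1 + ε) * C.card / 2 := by
  have e1 : ∑ v : V, (1 - f.x u v) = ∑ v ∈ univ \ C, (1 - f.x u v) + ∑ v ∈ C, (1 - f.x u v) :=
    (Finset.sum_sdiff (subset_univ C)).symm
  have e2 : ∑ v ∈ C, (1 - f.x u v) = C.card - ∑ v ∈ C, f.x u v := by simp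
  have e3 : ∑ v ∈ A ∩ C, (1 - f.x u v) = (A ∩ C).card - ∑ v ∈ A ∩ C, f.x u v := by simp
  have e4 : ∑ v ∈ A ∩ C, (1 - f.x u v) ≤ ∑ v ∈ A, (1 - f.x u v) :=
    Finset.sum_le_sum_of_subset_of_nonneg inter_subset_left
      fun v _ _ => by linarith [f.le_one u v]
  have e5 : ∑ v ∈ A ∩ C, f.x u v ≤ ∑ v ∈ C, f.x u v :=
    Finset.sum_le_sum_of_subset_of_nonneg inter_subset_right fun v _ _ => f.nonneg u v
  linarith

lemma main_ind {V : Type*} [Fintype V] [DecidableEq V]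
    (sign : Sym2 V → Bool) {ℓ : ℕ} (Vc : Fin ℓ → Finset V)
    (ε : ℝ) (hε : 0 < ε) (f : FracAssign V)
    (hfair : FairLP f Vc (fun _ => (1 : ℝ) / 2)) (S : Finset V) :
    ∃ c : V → V, (∀ z ∈ S, c z ∈ S) ∧
      (∀ a, 2 ≤ (S.filter (fun z => c z = a)).card → ∀ i : Fin ℓ,
        ((Vc i ∩ S.filter (fun z => c z = a)).card : ℝ)
          ≤ (1 + ε) * (S.filter (fun z => c z = a)).card / 2) ∧
      ∑ z ∈ S, ∑ v ∈ S, pairD sign c z v ≤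
        (4 + 1 / ε) * ∑ z ∈ S, ∑ v ∈ S, pairL f sign z v
          + 1 / ε * ∑ z ∈ S, ∑ v ∈ univ \ S, (1 - f.x z v) := by
  induction S using Finset.strongInduction with
  | H S ih =>
  have hε1 : 0 < 1 / ε := by positivity
  set β := 4 + 1 / ε with hβ
  have hβ0 : 0 < β := by positivity
  by_cases hgood : ∃ u ∈ S,
      ∑ v ∈ S.filter (fun v => f.x u v ≤ 1 / 2), (f.x u v - 1 / β) ≤ 0 ∧
      ∑ v ∈ S.filter (fun v => f.x u v ≤ 1 / 2), f.x u v
        + ∑ v ∈ univ \ S.filter (fun v => f.x u v ≤ 1 / 2), (1 - f.x u v)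
        ≤ ε * (S.filter (fun v => f.x u v ≤ 1 / 2)).card
  · obtain ⟨u, huS, havg, hM⟩ := hgood
    set C := S.filter (fun v => f.x u v ≤ 1 / 2) with hC
    have hCS : C ⊆ S := filter_subset _ _
    have huC : u ∈ C := by simp [hC, huS, f.diag]
    have hr : ∀ v ∈ C, f.x u v ≤ 1 / 2 := fun v hv => (mem_filter.1 hv).2
    obtain ⟨c, hc1, hc2, hc3⟩ := ih (S \ C) (by
      refine ⟨sdiff_subset, fun hh => ?_⟩
      exact (mem_sdiff.1 (hh huS)).2 huC)
    set c' : V → V := fun z => if z ∈ C then u else c z with hc'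
    have hin : ∀ z ∈ C, c' z = u := fun z hz => by simp [hc', hz]
    have hout : ∀ z ∈ S \ C, c' z = c z := fun z hz => by simp [hc', (mem_sdiff.1 hz).2]
    have hne : ∀ z ∈ S \ C, c' z ≠ u := fun z hz hh => by
      rw [hout z hz] at hh
      exact (mem_sdiff.1 (hc1 z hz)).2 (hh ▸ huC)
    refine ⟨c', ?_, ?_, ?_⟩
    · intro z hz
      by_cases hzC : z ∈ C
      · rw [hin z hzC]; exact huS
      · have hz' := mem_sdiff.2 ⟨hz, hzC⟩
        rw [hout z hz']; exact (mem_sdiff.1 (hc1 z hz')).1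
    · intro a
      by_cases ha : a = u
      · have : S.filter (fun z => c' z = a) = C := by
          subst ha
          ext z
          rw [mem_filter]
          constructor
          · rintro ⟨hz, hza⟩
            by_contra hzC
            exact hne z (mem_sdiff.2 ⟨hz, hzC⟩) hza
          · intro hz; exact ⟨hCS hz, hin z hz⟩
        rw [this]
        intro _ i
        exact fair_ball f ε (Vc i) C u (hfair u i) hM
      · have : S.filter (fun z => c' z = a) = (S \ C).filter (fun z => c z = a) := by
          ext z
          rw [mem_filter, mem_filter]
          constructor
          · rintro ⟨hz, hza⟩
            have hzC : z ∉ C := fun hzC => ha (by rw [← hza, hin z hzC])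
            have hz' := mem_sdiff.2 ⟨hz, hzC⟩
            exact ⟨hz', by rw [← hout z hz', hza]⟩
          · rintro ⟨hz', hza⟩
            exact ⟨(mem_sdiff.1 hz').1, by rw [hout z hz', hza]⟩
        rw [this]
        exact hc2 a
    · rw [dsum_split _ (pairD_symm sign c') S C hCS, dsum_split _ (pairL_symm f sign) S C hCS]
      have i1 : ∑ z ∈ C, ∑ v ∈ C, pairD sign c' z v ≤ β * ∑ z ∈ C, ∑ v ∈ C, pairL f sign z v := by
        refine le_trans (le_of_eq ?_) (internal_bound f sign β (by linarith) C u hr havg)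
        refine Finset.sum_congr rfl fun z hz => Finset.sum_congr rfl fun v hv => ?_
        simp [pairD, hin z hz, hin v hv]
      have i2 : ∑ z ∈ S \ C, ∑ v ∈ S \ C, pairD sign c' z v
          = ∑ z ∈ S \ C, ∑ v ∈ S \ C, pairD sign c z v := by
        refine Finset.sum_congr rfl fun z hz => Finset.sum_congr rfl fun v hv => ?_
        simp only [pairD]
        rw [hout z hz, hout v hv]
      have i3 : 2 * ∑ z ∈ S \ C, ∑ v ∈ C, pairD sign c' z v
          + 1 / ε * ∑ z ∈ S \ C, ∑ v ∈ C, (1 - f.x z v)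
          ≤ 2 * (β * ∑ z ∈ S \ C, ∑ v ∈ C, pairL f sign z v) := by
        simp only [Finset.mul_sum]
        rw [← Finset.sum_add_distrib]
        refine Finset.sum_le_sum fun z hz => ?_
        have hzC := (mem_sdiff.1 hz).2
        have hd : 1 / 2 ≤ f.x u z := by
          by_contra hcon
          exact hzC (mem_filter.2 ⟨(mem_sdiff.1 hz).1, by linarith⟩)
        have hb : 4 + 2 * (1 / ε / 2) = β := by rw [hβ]; ring
        have hcb := cross_bound f sign (1 / ε / 2) (1 / β) (by positivity)
          (by rw [hb]; field_simp) C u z hr hzC hd havg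
        rw [hb] at hcb
        have e1 : ∑ v ∈ C, pairD sign c' z v = ∑ v ∈ C, (if sign s(z, v) then (1 : ℝ) else 0) := by
          refine Finset.sum_congr rfl fun v hv => ?_
          have hzv : z ≠ v := fun hh => hzC (hh ▸ hv)
          have : c' z ≠ u := hne z hz
          simp [pairD, hzv, hin v hv, this]
        rw [Finset.sum_add_distrib, ← Finset.mul_sum] at hcb
        simp only [← Finset.mul_sum]
        rw [e1]
        linarith
      have i4 : ∑ z ∈ S \ C, ∑ v ∈ univ \ (S \ C), (1 - f.x z v)
          ≤ ∑ z ∈ S, ∑ v ∈ univ \ S, (1 - f.x z v)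
            + ∑ z ∈ S \ C, ∑ v ∈ C, (1 - f.x z v) := by
        have hU : univ \ (S \ C) = (univ \ S) ∪ C := by
          ext v
          simp only [mem_sdiff, mem_univ, true_and, mem_union]
          have := @hCS v
          tauto
        have hdis : Disjoint (univ \ S) C := by
          rw [Finset.disjoint_left]
          intro v hv hvC
          exact (mem_sdiff.1 hv).2 (hCS hvC)
        have : ∑ z ∈ S \ C, ∑ v ∈ univ \ (S \ C), (1 - f.x z v)
            = ∑ z ∈ S \ C, ∑ v ∈ univ \ S, (1 - f.x z v)
              + ∑ z ∈ S \ C, ∑ v ∈ C, (1 - f.x z v) := by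
          rw [hU, ← Finset.sum_add_distrib]
          exact Finset.sum_congr rfl fun z _ => Finset.sum_union hdis
        rw [this]
        refine add_le_add ?_ le_rfl
        refine Finset.sum_le_sum_of_subset_of_nonneg sdiff_subset fun z _ _ => ?_
        exact Finset.sum_nonneg fun v _ => by linarith [f.le_one z v]
      have i5 := mul_le_mul_of_nonneg_left i4 hε1.le
      rw [i2]
      linarith
  · push Not at hgood
    refine ⟨id, fun z hz => hz, ?_, ?_⟩
    · intro a h2
      exfalso
      have : (S.filter (fun z => id z = a)).card ≤ 1 := by
        rw [Finset.card_le_one]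
        intro x hx y hy
        rw [mem_filter] at hx hy
        exact hx.2.trans hy.2.symm
      omega
    · simp only [Finset.mul_sum]
      rw [← Finset.sum_add_distrib]
      refine Finset.sum_le_sum fun z hz => ?_
      simp only [← Finset.mul_sum]
      set P := S.filter (fun v => f.x z v ≤ 1 / 2) with hP
      have hPS : P ⊆ S := filter_subset _ _
      have hspl : ∑ v ∈ univ \ P, (1 - f.x z v)
          = ∑ v ∈ S \ P, (1 - f.x z v) + ∑ v ∈ univ \ S, (1 - f.x z v) := by
        have hU : univ \ P = (S \ P) ∪ (univ \ S) := by
          ext v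
          simp only [mem_sdiff, mem_univ, true_and, mem_union]
          have := @hPS v
          tauto
        rw [hU]
        refine Finset.sum_union ?_
        rw [Finset.disjoint_left]
        intro v hv hv'
        exact (mem_sdiff.1 hv').2 (mem_sdiff.1 hv).1
      have n1 : 0 ≤ ∑ v ∈ P, f.x z v := Finset.sum_nonneg fun v _ => f.nonneg z v
      have n2 : 0 ≤ ∑ v ∈ S \ P, (1 - f.x z v) :=
        Finset.sum_nonneg fun v _ => by linarith [f.le_one z v]
      have n3 : 0 ≤ ∑ v ∈ univ \ S, (1 - f.x z v) :=
        Finset.sum_nonneg fun v _ => by linarith [f.le_one z v]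
      have hcard : (P.card : ℝ) ≤ β * ∑ v ∈ P, f.x z v
          + 1 / ε * ∑ v ∈ S \ P, (1 - f.x z v) + 1 / ε * ∑ v ∈ univ \ S, (1 - f.x z v) := by
        have m2 := mul_nonneg hε1.le n2
        have m3 := mul_nonneg hε1.le n3
        by_cases hav : ∑ v ∈ P, (f.x z v - 1 / β) ≤ 0
        · have hg := hgood z hz hav
          rw [hspl] at hg
          have hg2 := mul_le_mul_of_nonneg_left hg.le hε1.le
          rw [← mul_assoc, one_div_mul_cancel hε.ne', one_mul] at hg2
          have : β * ∑ v ∈ P, f.x z v = 4 * ∑ v ∈ P, f.x z v + 1 / ε * ∑ v ∈ P, f.x z v := by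
            rw [hβ]; ring
          linarith
        · rw [Finset.sum_sub_distrib, Finset.sum_const, nsmul_eq_mul] at hav
          push Not at hav
          have h3 := mul_pos hβ0 hav
          have : β * (∑ v ∈ P, f.x z v - P.card * (1 / β)) = β * ∑ v ∈ P, f.x z v - P.card := by
            field_simp
          linarith
      have hDS : ∑ v ∈ S, pairD sign id z v
          = ∑ v ∈ S \ P, pairD sign id z v + ∑ v ∈ P, pairD sign id z v :=
        (Finset.sum_sdiff hPS).symm
      have hLS : ∑ v ∈ S, pairL f sign z v
          = ∑ v ∈ S \ P, pairL f sign z v + ∑ v ∈ P, pairL f sign z v :=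
        (Finset.sum_sdiff hPS).symm
      have j1 : ∑ v ∈ P, pairD sign id z v ≤ P.card := by
        rw [Finset.card_eq_sum_ones]
        push_cast
        refine Finset.sum_le_sum fun v _ => ?_
        simp only [pairD]
        split_ifs <;> norm_num
      have j2 : ∑ v ∈ P, f.x z v ≤ ∑ v ∈ P, pairL f sign z v := by
        refine Finset.sum_le_sum fun v hv => ?_
        have := (mem_filter.1 hv).2
        simp only [pairL]
        split_ifs with a b
        · rw [a, f.diag]
        · exact le_rfl
        · linarith
      have j3 : ∑ v ∈ S \ P, pairD sign id z v + 1 / ε * ∑ v ∈ S \ P, (1 - f.x z v)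
          ≤ β * ∑ v ∈ S \ P, pairL f sign z v := by
        rw [Finset.mul_sum, Finset.mul_sum, ← Finset.sum_add_distrib]
        refine Finset.sum_le_sum fun v hv => ?_
        have hx : 1 / 2 < f.x z v := by
          by_contra hcon
          exact (mem_sdiff.1 hv).2 (mem_filter.2 ⟨(mem_sdiff.1 hv).1, by linarith⟩)
        have hzv : z ≠ v := by
          rintro rfl
          rw [f.diag] at hx
          norm_num at hx
        have hx1 := f.le_one z v
        simp only [pairD, pairL, id, if_neg hzv]
        rw [hβ]
        split_ifs
        · nlinarith
        · nlinarith
      have j4 := mul_le_mul_of_nonneg_left j2 hβ0.le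
      rw [hDS, hLS]
      linarith

end helpers

/-- The special case where every fairness parameter is `1/2`:
a `(4 + 1/ε)`-approximation with `(1+ε)`-fair non-singleton clusters. -/
theorem fair_correlation_clustering_half {V : Type*} [Fintype V] [DecidableEq V]
    (sign : Sym2 V → Bool) {ℓ : ℕ}
    (Vc : Fin ℓ → Finset V)
    (ε : ℝ) (hε : 0 < ε)
    (f : FracAssign V)
    (hfair : FairLP f Vc (fun _ => (1 : ℝ) / 2)) :
    ∃ 𝒞 : Finset (Finset V), IsPartition 𝒞 ∧
      (∀ C ∈ 𝒞, 2 ≤ C.card → ∀ i : Fin ℓ,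
        ((Vc i ∩ C).card : ℝ) ≤ (1 + ε) * C.card / 2) ∧
      (corrCost sign 𝒞 (allPairs V) : ℝ) ≤
        (4 + 1 / ε) * LPcost f sign (allPairs V) := by
  obtain ⟨c, -, hc2, hc3⟩ := main_ind sign Vc ε hε f hfair univ
  have hsame : ∀ a b : V,
      sameCluster (univ.image (fun a : V => univ.filter (fun z => c z = c a))) s(a, b)
        ↔ c a = c b := by
    intro a b
    unfold sameCluster
    constructor
    · rintro ⟨C, hC, h⟩
      obtain ⟨d, -, rfl⟩ := mem_image.1 hC
      have h1 := h a (by simp)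
      have h2 := h b (by simp)
      simp only [mem_filter, mem_univ, true_and] at h1 h2
      rw [h1, h2]
    · intro h
      refine ⟨univ.filter (fun z => c z = c a), mem_image_of_mem _ (mem_univ a), ?_⟩
      intro d hd
      rcases Sym2.mem_iff.1 hd with rfl | rfl
      · simp
      · simp [h]
  refine ⟨univ.image (fun a : V => univ.filter (fun z => c z = c a)), ⟨?_, ?_, ?_⟩, ?_, ?_⟩
  · intro C hC
    obtain ⟨a, -, rfl⟩ := mem_image.1 hC
    exact ⟨a, by simp⟩
  · intro C hC C' hC' hne
    obtain ⟨a, -, rfl⟩ := mem_image.1 hC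
    obtain ⟨b, -, rfl⟩ := mem_image.1 hC'
    rw [Finset.disjoint_left]
    intro z hz hz'
    simp only [mem_filter, mem_univ, true_and] at hz hz'
    apply hne
    rw [← hz, ← hz']
  · intro v
    exact ⟨_, mem_image_of_mem _ (mem_univ v), by simp⟩
  · intro C hC h2 i
    obtain ⟨a, -, rfl⟩ := mem_image.1 hC
    exact hc2 (c a) h2 i
  · have e1 : ∑ z : V, ∑ v : V, pairL f sign z v = 2 * LPcost f sign (allPairs V) := by
      unfold LPcost
      rw [← sum_pairs_eq]
      refine Finset.sum_congr rfl fun z _ => Finset.sum_congr rfl fun v _ => ?_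
      unfold pairL FracAssign.val
      simp only [Sym2.lift_mk]
      by_cases h1 : z = v <;> simp [h1]
    have e2 : ∑ z : V, ∑ v : V, pairD sign c z v
        = 2 * (corrCost sign (univ.image (fun a : V => univ.filter (fun z => c z = c a)))
            (allPairs V) : ℝ) := by
      unfold corrCost
      rw [Finset.card_filter]
      push_cast
      rw [← sum_pairs_eq]
      refine Finset.sum_congr rfl fun z _ => Finset.sum_congr rfl fun v _ => ?_
      simp only [hsame, pairD]
      by_cases h1 : z = v <;> by_cases h2 : sign s(z, v) <;> by_cases h3 : c z = c v <;>
        simp [h1, h2, h3]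
    rw [e1, e2] at hc3
    simp only [sdiff_self, Finset.bot_eq_empty, Finset.sum_empty, Finset.sum_const_zero,
      mul_zero, add_zero] at hc3
    linarith
end

section
/- Let V be a finite vertex set with a complete signed graph, x a fractional assignment on V, and parameters σ, ρ with 0 < σ and 2σ ≤ ρ ≤ 1/2. Let C_1,…,C_k be a (ρ,σ)-cluster sequence, let 𝒞 be the partition of V consisting of the clusters C_1,…,C_k together with a singleton cluster {v} for each v ∈ V ∖ (C_1 ∪ ⋯ ∪ C_k), and let F be the set of all unordered pairs of distinct vertices having at least one endpoint in C_1 ∪ ⋯ ∪ C_k. Then corr_𝒞(F) ≤ max{ 1/(ρ−σ), 1/(1−ρ−σ) } · LP(F). -/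
open Finset
open scoped Classical

variable {V : Type*}

lemma aux_out {ι : Type*} (S : Finset ι) (d y : ι → ℝ) (P : ι → Prop) (t σ ρ : ℝ)
    (hσ : 0 < σ) (hρ1 : 2 * σ ≤ ρ) (hρ2 : ρ ≤ 1 / 2) (ht : ρ ≤ t)
    (h0 : ∀ v ∈ S, 0 ≤ y v) (h1 : ∀ v ∈ S, y v ≤ 1)
    (hl : ∀ v ∈ S, t - d v ≤ y v) (hu : ∀ v ∈ S, y v ≤ t + d v)
    (hd : ∀ v ∈ S, d v ≤ ρ) (hs : ∑ v ∈ S, d v ≤ σ * S.card) :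
    0 ≤ ∑ v ∈ S, ((if P v then y v else 1 - y v) - (ρ - σ) * (if P v then 1 else 0)) := by
  by_cases hc : t ≤ 1 - σ
  · have : ∑ v ∈ S, (σ - d v) ≤
        ∑ v ∈ S, ((if P v then y v else 1 - y v) - (ρ - σ) * (if P v then 1 else 0)) := by
      apply Finset.sum_le_sum
      intro v hv
      have := hl v hv
      have := hu v hv
      split_ifs <;> linarith
    rw [Finset.sum_sub_distrib, Finset.sum_const, nsmul_eq_mul] at this
    linarith
  · apply Finset.sum_nonneg
    intro v hv
    have := hl v hv
    have := hd v hv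
    have := h1 v hv
    split_ifs <;> linarith

lemma aux_in {ι : Type*} (S : Finset ι) (d y : ι → ℝ) (P : ι → Prop) (t σ ρ : ℝ)
    (hσ : 0 < σ) (hρ1 : 2 * σ ≤ ρ) (hρ2 : ρ ≤ 1 / 2) (ht : t ≤ ρ)
    (h0 : ∀ v ∈ S, 0 ≤ y v) (h1 : ∀ v ∈ S, y v ≤ 1)
    (hl : ∀ v ∈ S, t - d v ≤ y v) (hu : ∀ v ∈ S, y v ≤ t + d v)
    (hd : ∀ v ∈ S, d v ≤ ρ) (hs : ∑ v ∈ S, d v ≤ σ * S.card) :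
    0 ≤ ∑ v ∈ S, ((if P v then y v else 1 - y v) - (ρ - σ) * (if P v then 0 else 1)) := by
  by_cases hc : σ ≤ t
  · have : ∑ v ∈ S, (σ - d v) ≤
        ∑ v ∈ S, ((if P v then y v else 1 - y v) - (ρ - σ) * (if P v then 0 else 1)) := by
      apply Finset.sum_le_sum
      intro v hv
      have := hl v hv
      have := hu v hv
      split_ifs <;> linarith
    rw [Finset.sum_sub_distrib, Finset.sum_const, nsmul_eq_mul] at this
    linarith
  · apply Finset.sum_nonneg
    intro v hv
    have := hu v hv
    have := hd v hv
    have := h0 v hv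
    split_ifs <;> linarith

lemma aux_two {V : Type*} [Fintype V] [DecidableEq V] (h : Sym2 V → ℝ) :
    ∑ p : V × V, (if p.1 = p.2 then 0 else h s(p.1, p.2)) =
      2 * ∑ e : Sym2 V, (if e.IsDiag then 0 else h e) := by
  rw [← Finset.sum_fiberwise (s := Finset.univ) (g := fun p : V × V => s(p.1, p.2)), Finset.mul_sum]
  apply Finset.sum_congr rfl
  intro e _
  induction e using Sym2.ind with
  | _ a b =>
    by_cases hab : a = b
    · subst hab
      simp only [Sym2.mk_isDiag_iff, if_true, mul_zero]
      apply Finset.sum_eq_zero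
      intro p hp
      simp at hp
      simp [hp]
    · have : (Finset.univ.filter (fun p : V × V => s(p.1, p.2) = s(a, b))) = {(a, b), (b, a)} := by
        ext ⟨p, q⟩
        simp
      rw [this, Finset.sum_pair (by simp [hab])]
      have hba : ¬ b = a := fun h => hab h.symm
      simp only [Sym2.mk_isDiag_iff, hab, hba, if_false, Sym2.eq_swap (a := b) (b := a)]
      ring

/-- The multiplicity with which the ordered pair `(v, w)` is charged. -/
noncomputable def auxMult {V : Type*} {k : ℕ} (C : Fin k → Finset V) (v w : V) : ℝ :=
  ∑ j, if v ∈ C j ∧ ∀ i < j, w ∉ C i then (if w ∈ C j then 1 else 2) else 0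

lemma auxMult_zero {V : Type*} {k : ℕ} (C : Fin k → Finset V) (v w : V)
    (h : ∀ j, v ∉ C j) : auxMult C v w = 0 := by
  simp [auxMult, h]

lemma auxMult_mem {V : Type*} {k : ℕ} (C : Fin k → Finset V) (v w : V)
    (hd : ∀ v i j, v ∈ C i → v ∈ C j → i = j) (j : Fin k) (hj : v ∈ C j) :
    auxMult C v w = if ∀ i < j, w ∉ C i then (if w ∈ C j then 1 else 2) else 0 := by
  unfold auxMult
  rw [Finset.sum_eq_single j]
  · simp [hj]
  · intro b _ hb
    rw [if_neg]
    rintro ⟨h, -⟩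
    exact hb (hd _ _ _ h hj)
  · simp

lemma auxMult_add {V : Type*} {k : ℕ} (C : Fin k → Finset V) (v w : V)
    (hd : ∀ v i j, v ∈ C i → v ∈ C j → i = j) :
    auxMult C v w + auxMult C w v = if (∃ j, v ∈ C j) ∨ (∃ j, w ∈ C j) then 2 else 0 := by
  by_cases hv : ∃ j, v ∈ C j
  · obtain ⟨i, hi⟩ := hv
    rw [auxMult_mem C v w hd i hi, if_pos (Or.inl ⟨i, hi⟩)]
    by_cases hw : ∃ j, w ∈ C j
    · obtain ⟨l, hl⟩ := hw
      rw [auxMult_mem C w v hd l hl]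
      have e1 : ∀ j, v ∈ C j ↔ j = i := fun j => ⟨fun h => hd _ _ _ h hi, fun h => h ▸ hi⟩
      have e2 : ∀ j, w ∈ C j ↔ j = l := fun j => ⟨fun h => hd _ _ _ h hl, fun h => h ▸ hl⟩
      have f1 : (∀ j < i, ¬ j = l) ↔ i ≤ l :=
        ⟨fun h => not_lt.1 fun h' => h l h' rfl, fun h j hj e => by subst e; exact absurd hj (not_lt.2 h)⟩
      have f2 : (∀ j < l, ¬ j = i) ↔ l ≤ i :=
        ⟨fun h => not_lt.1 fun h' => h i h' rfl, fun h j hj e => by subst e; exact absurd hj (not_lt.2 h)⟩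
      simp only [e1, e2, f1, f2]
      rcases lt_trichotomy i l with h | h | h
      · simp [h.le, h.ne, not_le.2 h]
      · subst h; norm_num
      · simp [h.le, h.ne, not_le.2 h]
    · push Not at hw
      rw [auxMult_zero C w v hw]
      simp [hw]
  · push Not at hv
    rw [auxMult_zero C v w hv]
    by_cases hw : ∃ j, w ∈ C j
    · obtain ⟨l, hl⟩ := hw
      rw [auxMult_mem C w v hd l hl, if_pos (Or.inr ⟨l, hl⟩)]
      simp [hv]
    · push Not at hw
      rw [auxMult_zero C w v hw]
      simp [hv, hw]

lemma aux_sum {V : Type*} [Fintype V] {k : ℕ} (C : Fin k → Finset V) (G : V → V → ℝ)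
    (hG : ∀ v w, G v w = G w v)
    (hd : ∀ v i j, v ∈ C i → v ∈ C j → i = j)
    (hk : ∀ j w, (∀ i < j, w ∉ C i) → 0 ≤ ∑ v ∈ C j, G v w) :
    0 ≤ ∑ p : V × V, (if (∃ j, p.1 ∈ C j) ∨ (∃ j, p.2 ∈ C j) then G p.1 p.2 else 0) := by
  have h1 : 0 ≤ ∑ v, ∑ w, auxMult C v w * G v w := by
    have : ∑ v, ∑ w, auxMult C v w * G v w = ∑ j, ∑ w,
        (if ∀ i < j, w ∉ C i then (if w ∈ C j then (1:ℝ) else 2) else 0) * ∑ v ∈ C j, G v w := by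
      rw [Finset.sum_comm, Finset.sum_comm (s := (Finset.univ : Finset (Fin k)))]
      apply Finset.sum_congr rfl
      intro w _
      simp only [auxMult, Finset.sum_mul]
      rw [Finset.sum_comm]
      apply Finset.sum_congr rfl
      intro j _
      rw [Finset.mul_sum, ← Finset.sum_subset (Finset.subset_univ (C j))]
      · apply Finset.sum_congr rfl
        intro v hv
        simp [hv]
      · intro v _ hv
        simp [hv]
    rw [this]
    apply Finset.sum_nonneg; intro j _
    apply Finset.sum_nonneg; intro w _
    by_cases h : ∀ i < j, w ∉ C i
    · rw [if_pos h]
      exact mul_nonneg (by split_ifs <;> norm_num) (hk j w h)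
    · rw [if_neg h]; simp
  have h2 : ∑ v, ∑ w, auxMult C v w * G v w = ∑ v, ∑ w, auxMult C w v * G v w := by
    rw [Finset.sum_comm]
    apply Finset.sum_congr rfl; intro v _
    apply Finset.sum_congr rfl; intro w _
    rw [hG]
  have h3 : 2 * ∑ p : V × V, (if (∃ j, p.1 ∈ C j) ∨ (∃ j, p.2 ∈ C j) then G p.1 p.2 else 0)
      = ∑ v, ∑ w, auxMult C v w * G v w + ∑ v, ∑ w, auxMult C w v * G v w := by
    rw [Fintype.sum_prod_type, ← Finset.sum_add_distrib, Finset.mul_sum]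
    apply Finset.sum_congr rfl; intro v _
    rw [← Finset.sum_add_distrib, Finset.mul_sum]
    apply Finset.sum_congr rfl; intro w _
    rw [← add_mul, auxMult_add C v w hd]
    split_ifs <;> simp
  linarith

/-- Edges touching the non-degenerate clusters of a
`(ρ,σ)`-cluster sequence cost at most `max (1/(ρ-σ)) (1/(1-ρ-σ))` times their
LP cost-share, for the clustering made of these clusters plus singletons. -/
theorem nondegenerate_cost_bound {V : Type*} [Fintype V] [DecidableEq V]
    (sign : Sym2 V → Bool) (f : FracAssign V)
    (σ ρ : ℝ) (hσ : 0 < σ) (hρ1 : 2 * σ ≤ ρ) (hρ2 : ρ ≤ 1 / 2)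
    {k : ℕ} (C : Fin k → Finset V) (u : Fin k → V)
    (hC : ClusterSeq f ρ σ C u) :
    (corrCost sign
        ((Finset.univ.image C) ∪
          ((Finset.univ \ Finset.univ.biUnion C).image (fun v => {v})))
        (pairsBetween (Finset.univ.biUnion C) Finset.univ) : ℝ) ≤
      max (1 / (ρ - σ)) (1 / (1 - ρ - σ)) *
        LPcost f sign (pairsBetween (Finset.univ.biUnion C) Finset.univ) := by
  set W := (Finset.univ.biUnion C) with hW
  set CC := (Finset.univ.image C) ∪ ((Finset.univ \ W).image (fun v => ({v} : Finset V))) with hCC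
  have hpos : 0 < ρ - σ := by linarith
  have hmem : ∀ j v, v ∈ C j ↔ (∀ i < j, v ∉ C i) ∧ f.x (u j) v ≤ ρ := by
    intro j v
    have := (hC j).2.2.1
    have h2 : v ∈ C j ↔ v ∈ (Finset.univ \ ((Finset.univ.filter (fun i => i < j)).biUnion C)).filter
            (fun v => f.x (u j) v ≤ ρ) := by rw [← this]
    rw [h2]; simp
  have hd : ∀ v i j, v ∈ C i → v ∈ C j → i = j := by
    intro v i j hi hj
    rcases lt_trichotomy i j with h | h | h
    · exact absurd hi (((hmem j v).1 hj).1 i h)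
    · exact h
    · exact absurd hj (((hmem i v).1 hi).1 j h)
  have hsame : ∀ a b, a ≠ b → (sameCluster CC s(a, b) ↔ ∃ j, a ∈ C j ∧ b ∈ C j) := by
    intro a b hab
    unfold sameCluster
    constructor
    · rintro ⟨D, hD, h⟩
      have ha := h a (by simp)
      have hb := h b (by simp)
      rw [hCC, Finset.mem_union, Finset.mem_image, Finset.mem_image] at hD
      rcases hD with ⟨j, -, rfl⟩ | ⟨v, -, rfl⟩
      · exact ⟨j, ha, hb⟩
      · simp at ha hb
        exact absurd (ha.trans hb.symm) hab
    · rintro ⟨j, ha, hb⟩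
      refine ⟨C j, ?_, ?_⟩
      · rw [hCC]; simp
      · intro c hc
        simp at hc
        rcases hc with rfl | rfl <;> assumption
  let g : Sym2 V → ℝ := fun e => (if sign e then f.val e else 1 - f.val e) -
    (ρ - σ) * (if (if sign e then ¬ sameCluster CC e else sameCluster CC e) then 1 else 0)
  have hF : ∀ e : Sym2 V, e ∈ pairsBetween W Finset.univ ↔
      ¬ e.IsDiag ∧ ∃ v ∈ e, ∃ j, v ∈ C j := by
    intro e
    simp only [pairsBetween, Finset.mem_filter, Finset.mem_univ, true_and, and_true]
    refine and_congr_right fun _ => ?_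
    constructor
    · rintro ⟨a, b, rfl, ha⟩
      exact ⟨a, by simp, by simpa [hW] using ha⟩
    · rintro ⟨v, ⟨b, rfl⟩, hv⟩
      exact ⟨v, b, rfl, by simpa [hW] using hv⟩
  have key : 0 ≤ ∑ e ∈ pairsBetween W Finset.univ, g e := by
    let G : V → V → ℝ := fun a b => if a = b then 0 else g s(a, b)
    have hs := aux_sum C G (fun v w => by
      simp only [G, Sym2.eq_swap (a := v) (b := w), eq_comm (a := v) (b := w)]) hd ?_
    · have h2 := aux_two (fun e : Sym2 V => if ∃ v ∈ e, ∃ j, v ∈ C j then g e else 0)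
      have h3 : ∑ e ∈ pairsBetween W Finset.univ, g e =
          ∑ e : Sym2 V, (if e.IsDiag then 0 else if ∃ v ∈ e, ∃ j, v ∈ C j then g e else 0) := by
        rw [← Finset.sum_subset (Finset.subset_univ (pairsBetween W Finset.univ))]
        · apply Finset.sum_congr rfl
          intro e he
          rw [hF] at he
          rw [if_neg he.1, if_pos he.2]
        · intro e _ he
          rw [hF] at he
          by_cases h : e.IsDiag
          · rw [if_pos h]
          · rw [if_neg h, if_neg fun h' => he ⟨h, h'⟩]
      have h4 : 0 ≤
          ∑ p : V × V, (if p.1 = p.2 then 0 else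
            (fun e : Sym2 V => if ∃ v ∈ e, ∃ j, v ∈ C j then g e else 0) s(p.1, p.2)) := by
        refine hs.trans (le_of_eq ?_)
        apply Finset.sum_congr rfl
        rintro ⟨a, b⟩ _
        by_cases hab : a = b
        · simp [G, hab]
        · simp [G, hab]
      rw [h2] at h4
      rw [h3]
      linarith
    · intro j w hw
      have hsum := (hC j).2.2.2
      by_cases hwj : w ∈ C j
      · have := aux_in (C j) (fun v => f.x (u j) v) (fun v => f.x v w)
          (fun v => v = w ∨ sign s(v, w) = true) (f.x (u j) w) σ ρ hσ hρ1 hρ2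
          ((hmem j w).1 hwj).2 (fun v _ => f.nonneg _ _) (fun v _ => f.le_one _ _)
          (fun v _ => by linarith [f.triangle (u j) v w])
          (fun v _ => by linarith [f.triangle v (u j) w, f.symm v (u j)])
          (fun v hv => ((hmem j v).1 hv).2) hsum
        refine this.trans (le_of_eq ?_)
        apply Finset.sum_congr rfl
        intro v hv
        by_cases hvw : v = w
        · simp [G, hvw, f.diag]
        · have : sameCluster CC s(v, w) := (hsame v w hvw).2 ⟨j, hv, hwj⟩
          by_cases hsg : sign s(v, w) = true <;>
            simp [G, g, hvw, hsg, this, FracAssign.val]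
      · have hwρ : ρ ≤ f.x (u j) w := by
          by_contra h
          exact hwj ((hmem j w).2 ⟨hw, (not_le.1 h).le⟩)
        have := aux_out (C j) (fun v => f.x (u j) v) (fun v => f.x v w)
          (fun v => sign s(v, w) = true) (f.x (u j) w) σ ρ hσ hρ1 hρ2
          hwρ (fun v _ => f.nonneg _ _) (fun v _ => f.le_one _ _)
          (fun v _ => by linarith [f.triangle (u j) v w])
          (fun v _ => by linarith [f.triangle v (u j) w, f.symm v (u j)])
          (fun v hv => ((hmem j v).1 hv).2) hsum
        refine this.trans (le_of_eq ?_)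
        apply Finset.sum_congr rfl
        intro v hv
        have hvw : v ≠ w := fun h => hwj (h ▸ hv)
        have : ¬ sameCluster CC s(v, w) := by
          rw [hsame v w hvw]
          rintro ⟨i, h1, h2⟩
          exact hwj (hd _ _ _ h1 hv ▸ h2)
        by_cases hsg : sign s(v, w) = true <;>
          simp [G, g, hvw, hsg, this, FracAssign.val]
  have hfin : (ρ - σ) * (corrCost sign CC (pairsBetween W Finset.univ) : ℝ) ≤
      LPcost f sign (pairsBetween W Finset.univ) := by
    simp only [g] at key
    rw [Finset.sum_sub_distrib, ← Finset.mul_sum, Finset.sum_boole] at key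
    unfold corrCost LPcost
    linarith
  have hLP : 0 ≤ LPcost f sign (pairsBetween W Finset.univ) :=
    le_trans (mul_nonneg hpos.le (Nat.cast_nonneg _)) hfin
  calc (corrCost sign CC (pairsBetween W Finset.univ) : ℝ)
      ≤ 1 / (ρ - σ) * LPcost f sign (pairsBetween W Finset.univ) := by
        rw [one_div, inv_mul_eq_div, le_div_iff₀ hpos]
        linarith
    _ ≤ _ := mul_le_mul_of_nonneg_right (le_max_left _ _) hLP
end

section
/- Let V be a finite vertex set with a complete signed graph, x a fractional assignment on V, and parameters σ, ρ with 0 < σ and 2σ ≤ ρ ≤ 1/2. Let u ∈ V, let T ⊆ {w ∈ V : x(u,w) ≤ ρ}, and let v ∈ V be a vertex with x(u,v) ≥ 1 − σ. Then |E⁺(v,T)| ≤ (1/(1−ρ−σ)) · LP(E⁺(v,T)), where E⁺(v,T) is the set of positive pairs with one endpoint v and the other in T. -/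
open Finset
open scoped Classical

variable {V : Type*}

/-- Lemma: far positive crossing edges.  If `x u v ≥ 1 - σ`
and `T` lies in the `ρ`-ball around `u`, then
`|E⁺(v,T)| ≤ (1/(1-ρ-σ)) · LP(E⁺(v,T))`. -/
theorem far_positive_edges {V : Type*} [Fintype V] [DecidableEq V]
    (sign : Sym2 V → Bool) (f : FracAssign V)
    (σ ρ : ℝ) (hσ : 0 < σ) (hρ1 : 2 * σ ≤ ρ) (hρ2 : ρ ≤ 1 / 2)
    (u : V) (T : Finset V) (hT : ∀ w ∈ T, f.x u w ≤ ρ)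
    (v : V) (hv : 1 - σ ≤ f.x u v) :
    ((Epos sign {v} T).card : ℝ) ≤
      (1 / (1 - ρ - σ)) * LPcost f sign (Epos sign {v} T) := by
  have hpos : 0 < 1 - ρ - σ := by linarith
  rw [one_div, inv_mul_eq_div, le_div_iff₀ hpos, ← nsmul_eq_mul]
  unfold LPcost
  apply Finset.card_nsmul_le_sum
  intro e he
  simp only [Epos, pairsBetween, Finset.mem_filter, Finset.mem_singleton] at he
  obtain ⟨⟨_, _, a, w, rfl, rfl, hw⟩, hs⟩ := he
  rw [if_pos hs]
  change 1 - ρ - σ ≤ f.x a w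
  have h1 := f.triangle u w a
  have h2 := hT w hw
  have h3 := f.symm w a
  linarith
end

section
/- Let V be a finite vertex set with a complete signed graph, x a fractional assignment on V, and parameters σ, ρ with 0 < σ and 2σ ≤ ρ ≤ 1/2. Let u ∈ V and let T ⊆ {w ∈ V : x(u,w) ≤ ρ} be a nonempty set satisfying the density condition Σ_{w∈T} x(u,w) ≤ σ·|T|. Let v ∈ V ∖ T be a vertex with ρ ≤ x(u,v) ≤ 1 − σ. Then |E⁺(v,T)| ≤ (1/(ρ−σ)) · LP(E(v,T)). -/
open Finset
open scoped Classical

variable {V : Type*}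

/-- Lemma: near positive crossing edges.  If `T` is a dense
`ρ`-ball around `u` and `v ∉ T` with `ρ ≤ x u v ≤ 1 - σ`, then
`|E⁺(v,T)| ≤ (1/(ρ-σ)) · LP(E(v,T))`. -/
theorem near_positive_edges {V : Type*} [Fintype V] [DecidableEq V]
    (sign : Sym2 V → Bool) (f : FracAssign V)
    (σ ρ : ℝ) (hσ : 0 < σ) (hρ1 : 2 * σ ≤ ρ) (hρ2 : ρ ≤ 1 / 2)
    (u : V) (T : Finset V) (hTne : T.Nonempty)
    (hT : ∀ w ∈ T, f.x u w ≤ ρ)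
    (hdense : ∑ w ∈ T, f.x u w ≤ σ * T.card)
    (v : V) (hvT : v ∉ T) (hv1 : ρ ≤ f.x u v) (hv2 : f.x u v ≤ 1 - σ) :
    ((Epos sign {v} T).card : ℝ) ≤
      (1 / (ρ - σ)) * LPcost f sign (pairsBetween {v} T) := by
  have hpb : pairsBetween {v} T = T.image (fun w => s(v, w)) := by
    ext e
    simp only [pairsBetween, Finset.mem_filter, Finset.mem_univ, true_and,
      Finset.mem_singleton, Finset.mem_image]
    constructor
    · rintro ⟨_, a, b, rfl, rfl, hb⟩
      exact ⟨b, hb, rfl⟩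
    · rintro ⟨w, hw, rfl⟩
      refine ⟨?_, v, w, rfl, rfl, hw⟩
      rw [Sym2.mk_isDiag_iff]
      rintro rfl
      exact hvT hw
  have hinj : Set.InjOn (fun w => s(v, w)) (T : Set V) := by
    intro a _ b _ hab
    exact Sym2.congr_right.mp hab
  have hcard : ((Epos sign {v} T).card : ℝ)
      = ∑ w ∈ T, if sign s(v, w) then (1 : ℝ) else 0 := by
    rw [Epos, Finset.card_filter, hpb, Finset.sum_image hinj]
    push_cast
    rfl
  have hLP : LPcost f sign (pairsBetween {v} T)
      = ∑ w ∈ T, if sign s(v, w) then f.x v w else 1 - f.x v w := by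
    rw [LPcost, hpb, Finset.sum_image hinj]
    rfl
  have hpos : 0 < ρ - σ := by linarith
  have key : ∑ w ∈ T, ((ρ - σ) * (if sign s(v, w) then (1 : ℝ) else 0) + (σ - f.x u w))
      ≤ ∑ w ∈ T, if sign s(v, w) then f.x v w else 1 - f.x v w := by
    apply Finset.sum_le_sum
    intro w _
    have h1 := f.triangle u w v
    have h2 := f.triangle v u w
    have h3 := f.symm w v
    have h4 := f.symm v u
    split_ifs <;> linarith
  rw [Finset.sum_add_distrib, ← Finset.mul_sum, Finset.sum_sub_distrib, Finset.sum_const,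
    nsmul_eq_mul] at key
  rw [hcard, hLP, one_div, inv_mul_eq_div, le_div_iff₀ hpos]
  linarith
end

section
/- Let V be a finite vertex set with a complete signed graph, x a fractional assignment on V, and 0 ≤ ρ < 1. Let u ∈ V and let N be a set of negative pairs {v,w} such that x(u,v) ≤ ρ/2 and x(u,w) ≤ ρ/2. Then |N| ≤ (1/(1−ρ)) · LP(N). -/
open Finset
open scoped Classical

variable {V : Type*}

/-- Lemma: short negative edges.  Negative pairs whose two
endpoints are both within distance `ρ/2` of `u` number at most
`(1/(1-ρ)) · LP(N)`. -/
theorem short_negative_edges {V : Type*} [Fintype V] [DecidableEq V]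
    (sign : Sym2 V → Bool) (f : FracAssign V)
    (ρ : ℝ) (hρ0 : 0 ≤ ρ) (hρ1 : ρ < 1)
    (u : V) (N : Finset (Sym2 V))
    (hNneg : ∀ e ∈ N, ¬ e.IsDiag ∧ sign e = false)
    (hNclose : ∀ e ∈ N, ∀ a ∈ e, f.x u a ≤ ρ / 2) :
    (N.card : ℝ) ≤ (1 / (1 - ρ)) * LPcost f sign N := by
  have h : ∀ e ∈ N, 1 - ρ ≤ (if sign e then f.val e else 1 - f.val e) := by
    intro e he
    rw [(hNneg e he).2]
    have hc := hNclose e he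
    clear he
    induction e using Sym2.ind with
    | _ a b =>
      have ha := hc a (Sym2.mem_mk_left a b)
      have hb := hc b (Sym2.mem_mk_right a b)
      have ht := f.triangle a u b
      have hs := f.symm a u
      have hv : f.val s(a, b) = f.x a b := rfl
      simp only [Bool.false_eq_true, if_false, hv]
      linarith
  have hs := Finset.card_nsmul_le_sum N _ _ h
  rw [nsmul_eq_mul] at hs
  have hp : 0 < 1 - ρ := by linarith
  rw [one_div, inv_mul_eq_div, le_div_iff₀ hp]
  exact hs
end

section
/- Let V be a finite vertex set with a complete signed graph, x a fractional assignment on V, and parameters σ, ρ with 0 < σ and 2σ ≤ ρ ≤ 1/2. Let u ∈ V and let T ⊆ {w ∈ V : x(u,w) ≤ ρ} satisfy the density condition Σ_{w∈T} x(u,w) ≤ σ·|T|. Let < be a strict total order on T such that v < w implies x(u,v) ≤ x(u,w), and for v ∈ T set T^<(v) := {w ∈ T : w < v}. Then for every v ∈ T with x(u,v) > ρ/2, |E⁻(v, T^<(v))| ≤ (1/(1−ρ−σ)) · LP(E(v, T^<(v))). -/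
open Finset
open scoped Classical

variable {V : Type*}

/-- Lemma: long negative edges.  With `T` a dense `ρ`-ball
around `u` and `r` a strict total order on `T` compatible with distance to `u`,
for each `v ∈ T` with `x u v > ρ/2` we have
`|E⁻(v, T^<(v))| ≤ (1/(1-ρ-σ)) · LP(E(v, T^<(v)))`. -/
theorem long_negative_edges {V : Type*} [Fintype V] [DecidableEq V]
    (sign : Sym2 V → Bool) (f : FracAssign V)
    (σ ρ : ℝ) (hσ : 0 < σ) (hρ1 : 2 * σ ≤ ρ) (hρ2 : ρ ≤ 1 / 2)
    (u : V) (T : Finset V) (hT : ∀ w ∈ T, f.x u w ≤ ρ)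
    (hdense : ∑ w ∈ T, f.x u w ≤ σ * T.card)
    (r : V → V → Prop)
    (hirr : ∀ a ∈ T, ¬ r a a)
    (htrans : ∀ a ∈ T, ∀ b ∈ T, ∀ c ∈ T, r a b → r b c → r a c)
    (htotal : ∀ a ∈ T, ∀ b ∈ T, a ≠ b → r a b ∨ r b a)
    (hmono : ∀ a ∈ T, ∀ b ∈ T, r a b → f.x u a ≤ f.x u b)
    (v : V) (hvT : v ∈ T) (hv : ρ / 2 < f.x u v) :
    ((Eneg sign {v} (T.filter (fun w => r w v))).card : ℝ) ≤
      (1 / (1 - ρ - σ)) *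
        LPcost f sign (pairsBetween {v} (T.filter (fun w => r w v))) := by
  set S : Finset V := T.filter (fun w => r w v) with hS
  have hST : ∀ w ∈ S, w ∈ T ∧ r w v := by
    intro w hw
    rw [hS, Finset.mem_filter] at hw
    exact hw
  have hvS : v ∉ S := fun h => hirr v hvT (hST v h).2
  -- density restricted to the predecessors of v
  have hdS : ∑ w ∈ S, f.x u w ≤ σ * S.card := by
    have h1 : ∑ w ∈ S, (f.x u w - σ) ≤ ∑ w ∈ T, (f.x u w - σ) := by
      apply Finset.sum_le_sum_of_subset_of_nonneg
      · intro w hw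
        exact (hST w hw).1
      · intro w hw hwS
        have hnr : ¬ r w v := fun h => hwS (by rw [hS, Finset.mem_filter]; exact ⟨hw, h⟩)
        have hle : f.x u v ≤ f.x u w := by
          by_cases hwv : w = v
          · rw [hwv]
          · rcases htotal w hw v hvT hwv with h | h
            · exact absurd h hnr
            · exact hmono v hvT w hw h
        linarith
    simp only [Finset.sum_sub_distrib, Finset.sum_const, nsmul_eq_mul] at h1
    linarith
  have hinj : Set.InjOn (fun w => s(v, w)) (S : Set V) := by
    intro a _ b _ h
    exact Sym2.congr_right.mp h
  have hpairs : pairsBetween {v} S = S.image (fun w => s(v, w)) := by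
    ext e
    simp only [pairsBetween, Finset.mem_filter, Finset.mem_univ, true_and,
      Finset.mem_singleton, Finset.mem_image]
    constructor
    · rintro ⟨_, a, b, rfl, rfl, hb⟩
      exact ⟨b, hb, rfl⟩
    · rintro ⟨w, hw, rfl⟩
      refine ⟨?_, v, w, rfl, rfl, hw⟩
      rw [Sym2.mk_isDiag_iff]
      rintro rfl
      exact hvS hw
  have hcard : ((Eneg sign {v} S).card : ℝ) = ∑ w ∈ S, if sign s(v, w) then (0 : ℝ) else 1 := by
    rw [Eneg, hpairs, Finset.card_filter]
    push_cast
    rw [Finset.sum_image hinj]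
    apply Finset.sum_congr rfl
    intro w _
    by_cases h : sign s(v, w) <;> simp [h]
  have hLP : LPcost f sign (pairsBetween {v} S) =
      ∑ w ∈ S, if sign s(v, w) then f.x v w else 1 - f.x v w := by
    rw [LPcost, hpairs, Finset.sum_image hinj]
    rfl
  have hpos : 0 < 1 - ρ - σ := by linarith
  rw [hcard, hLP, one_div, inv_mul_eq_div, le_div_iff₀ hpos]
  have hd := hT v hvT
  have key : ∑ w ∈ S, ((if sign s(v, w) then (0 : ℝ) else 1) * (1 - ρ - σ) + σ - f.x u w) ≤
      ∑ w ∈ S, if sign s(v, w) then f.x v w else 1 - f.x v w := by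
    apply Finset.sum_le_sum
    intro w _
    have t1 := f.triangle v u w
    have t2 := f.triangle u w v
    rw [f.symm v u] at t1
    rw [f.symm w v] at t2
    split_ifs <;> linarith
  simp only [Finset.sum_sub_distrib, Finset.sum_add_distrib, ← Finset.sum_mul,
    Finset.sum_const, nsmul_eq_mul] at key
  linarith
end

section
/- Let V be a finite vertex set with a complete signed graph, x a fractional assignment on V, ε > 0, ρ ≤ 1/2, a color class V_i ⊆ V with parameter 0 < α_i < 1, and a vertex u ∈ V such that the LP fairness constraint Σ_{v∈V_i}(1 − x(u,v)) ≤ α_i · Σ_{v∈V}(1 − x(u,v)) holds. Let T ⊆ {v ∈ V : x(u,v) ≤ ρ} be a set with |V_i ∩ T| > (1+ε)·α_i·|T|. Then, writing α_i' := α_i/(1−α_i), we have ε·α_i'·|T| ≤ LP(E(u, V_i ∩ T)) + α_i' · Σ_{v ∈ (V∖T)∖V_i} (1 − x(u,v)). -/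
open Finset
open scoped Classical

variable {V : Type*}

/-- Claim: fairness violation gives LP charge.  If the LP
fairness constraint for color `Vi` holds at `u`, `T` lies in the `ρ`-ball
around `u` and the `ε`-fairness of `T` for `Vi` is violated, then
`ε·α'·|T| ≤ LP(E(u, Vi∩T)) + α' · ∑_{v∈(V∖T)∖Vi} (1 - x u v)`
with `α' = αi/(1-αi)`. -/
theorem fairness_violation_charge {V : Type*} [Fintype V] [DecidableEq V]
    (sign : Sym2 V → Bool) (f : FracAssign V)
    (ε ρ : ℝ) (hε : 0 < ε) (hρ : ρ ≤ 1 / 2)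
    (Vi : Finset V) (αi : ℝ) (hαi0 : 0 < αi) (hαi1 : αi < 1)
    (u : V)
    (hfair : ∑ v ∈ Vi, (1 - f.x u v) ≤ αi * ∑ v : V, (1 - f.x u v))
    (T : Finset V) (hT : ∀ v ∈ T, f.x u v ≤ ρ)
    (hviol : (1 + ε) * αi * (T.card : ℝ) < ((Vi ∩ T).card : ℝ)) :
    ε * (αi / (1 - αi)) * T.card ≤
      LPcost f sign (pairsBetween {u} (Vi ∩ T)) +
        (αi / (1 - αi)) * ∑ v ∈ (Finset.univ \ T) \ Vi, (1 - f.x u v) := by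
  have hLP : ∑ v ∈ Vi ∩ T, f.x u v ≤ LPcost f sign (pairsBetween {u} (Vi ∩ T)) := by
    have himg : pairsBetween {u} (Vi ∩ T) = ((Vi ∩ T).erase u).image (fun v => s(u, v)) := by
      ext e
      simp only [pairsBetween, Finset.mem_filter, Finset.mem_univ, true_and,
        Finset.mem_image, Finset.mem_singleton, Finset.mem_erase]
      constructor
      · rintro ⟨hd, a, b, rfl, rfl, hb⟩
        refine ⟨b, ⟨?_, hb⟩, rfl⟩
        rintro rfl
        exact hd (by simp)
      · rintro ⟨b, ⟨hne, hb⟩, rfl⟩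
        refine ⟨?_, u, b, rfl, rfl, hb⟩
        simpa using fun h : u = b => hne h.symm
    have hinj : Set.InjOn (fun v => s(u, v)) ((Vi ∩ T).erase u : Finset V) := by
      intro a _ b _ h
      exact Sym2.congr_right.mp h
    rw [himg, LPcost, Finset.sum_image hinj]
    rw [← Finset.sum_erase (Vi ∩ T) (f.diag u)]
    refine Finset.sum_le_sum fun v hv => ?_
    have hvT := hT v (Finset.mem_inter.mp (Finset.mem_of_mem_erase hv)).2
    have hval : f.val s(u, v) = f.x u v := rfl
    rw [hval]
    split_ifs <;> linarith
  have hVi : ∑ v ∈ Vi, (1 - f.x u v)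
      = ∑ v ∈ Vi ∩ T, (1 - f.x u v) + ∑ v ∈ Vi \ T, (1 - f.x u v) :=
    (Finset.sum_inter_add_sum_sdiff Vi T _).symm
  have hTs : ∑ v ∈ T, (1 - f.x u v)
      = ∑ v ∈ Vi ∩ T, (1 - f.x u v) + ∑ v ∈ T \ Vi, (1 - f.x u v) := by
    rw [Finset.inter_comm]
    exact (Finset.sum_inter_add_sum_sdiff T Vi _).symm
  have hc : ∑ v ∈ univ \ T, (1 - f.x u v)
      = ∑ v ∈ Vi \ T, (1 - f.x u v) + ∑ v ∈ (univ \ T) \ Vi, (1 - f.x u v) := by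
    rw [← Finset.sum_inter_add_sum_sdiff (univ \ T) Vi]
    congr 2
    ext v
    simp [and_comm]
  have hU : ∑ v, (1 - f.x u v) = ∑ v ∈ univ \ T, (1 - f.x u v) + ∑ v ∈ T, (1 - f.x u v) :=
    (Finset.sum_sdiff (Finset.subset_univ T)).symm
  have hA : ∑ v ∈ Vi ∩ T, (1 - f.x u v) = ((Vi ∩ T).card : ℝ) - ∑ v ∈ Vi ∩ T, f.x u v := by
    simp [Finset.sum_sub_distrib]
  have hB : ∑ v ∈ T \ Vi, (1 - f.x u v) ≤ ((T \ Vi).card : ℝ) := by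
    have h := Finset.sum_le_card_nsmul (T \ Vi) (fun v => 1 - f.x u v) 1
      (fun v _ => by linarith [f.nonneg u v])
    simpa using h
  have hcard : (T.card : ℝ) = ((Vi ∩ T).card : ℝ) + ((T \ Vi).card : ℝ) := by
    have h := Finset.card_inter_add_card_sdiff T Vi
    rw [Finset.inter_comm] at h
    exact_mod_cast h.symm
  have hD : 0 ≤ ∑ v ∈ Vi \ T, (1 - f.x u v) :=
    Finset.sum_nonneg fun v _ => by linarith [f.le_one u v]
  rw [hU, hVi, hc, hTs, hA] at hfair
  generalize ∑ v ∈ (univ \ T) \ Vi, (1 - f.x u v) = R at *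
  generalize ∑ v ∈ Vi \ T, (1 - f.x u v) = D at *
  generalize ∑ v ∈ T \ Vi, (1 - f.x u v) = B at *
  generalize ∑ v ∈ Vi ∩ T, f.x u v = X at *
  generalize LPcost f sign (pairsBetween {u} (Vi ∩ T)) = L at *
  have h1 : 0 < 1 - αi := by linarith
  have key : ε * αi * T.card ≤ (1 - αi) * L + αi * R := by
    have e1 := mul_le_mul_of_nonneg_left hLP h1.le
    have e2 := mul_le_mul_of_nonneg_left hB hαi0.le
    have e3 := mul_nonneg h1.le hD
    have e4 : αi * T.card = αi * ((Vi ∩ T).card : ℝ) + αi * ((T \ Vi).card : ℝ) := by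
      rw [hcard]; ring
    linarith
  have e : L + αi / (1 - αi) * R - ε * (αi / (1 - αi)) * T.card
      = ((1 - αi) * L + αi * R - ε * αi * T.card) / (1 - αi) := by
    field_simp
  have := div_nonneg (sub_nonneg.mpr key) h1.le
  linarith
end
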